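/- Let A be a dehyperplane arrangement in an n-simanifold T. For every flat X ∈ L_A, the number of chambers of the restriction A^X is given by #C_{A^X} = Σ_{Y ∈ L_A, Y ≥ X} (−1)^{dim Y − dim X} μ(X, Y), where μ is the Möbius function of L_A. -/

import Mathlib

open Set

noncomputable section

/-- The ambient Euclidean space `ℝ^N`. -/
abbrev Euc (N : ℕ) := EuclideanSpace ℝ (Fin N)

/-- An `i`-simanifold: a nonempty (open, i.e. boundaryless) contractible topological
`i`-manifold, realized as a subset of the ambient space. -/
def IsSimanifold {N : ℕ} (i : ℕ) (S : Set (Euc N)) : Prop :=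
  S.Nonempty ∧ ContractibleSpace S ∧ Nonempty (ChartedSpace (EuclideanSpace ℝ (Fin i)) S)

/-- A dehyperplane in an `n`-simanifold `T`: an `(n-1)`-simanifold `P ⊆ T` cutting `T`
into two `n`-simanifolds `plus` and `minus`, with `plus ⊔ P ⊔ minus = T` and
`closure plus ∩ closure minus = P`. -/
structure Dehyperplane (N n : ℕ) (T : Set (Euc N)) where
  P : Set (Euc N)
  plus : Set (Euc N)
  minus : Set (Euc N)
  simP : IsSimanifold (n - 1) P
  simPlus : IsSimanifold n plus
  simMinus : IsSimanifold n minus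
  union_eq : plus ∪ P ∪ minus = T
  disj_pP : Disjoint plus P
  disj_pm : Disjoint plus minus
  disj_Pm : Disjoint P minus
  closure_eq : closure plus ∩ closure minus = P

/-- `L_A`: the set of nonempty intersections of elements of `A` (empty intersection `T`),
the flats of `A`. (Ordered by reverse inclusion: `X ≤ Y ↔ Y ⊆ X`.) -/
def flats {N n : ℕ} {T : Set (Euc N)} (A : Set (Dehyperplane N n T)) : Set (Set (Euc N)) :=
  {X | X.Nonempty ∧ ∃ B ⊆ A, X = T ∩ ⋂ P ∈ B, P.P}

/-- A dehyperplane arrangement (DA) in the `n`-simanifold `T`. -/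
def IsDA {N : ℕ} (n : ℕ) (T : Set (Euc N)) (A : Set (Dehyperplane N n T)) : Prop :=
  A.Finite ∧ ∀ P ∈ A, ∀ X ∈ flats A, (P.P ∩ X).Nonempty →
    X ⊆ P.P ∨ ∃ i, 1 ≤ i ∧ i ≤ n ∧ IsSimanifold (i - 1) (P.P ∩ X) ∧
      IsSimanifold i (P.plus ∩ X) ∧ IsSimanifold i (P.minus ∩ X)

/-- `P^ε` for a sign `ε ∈ {+,0,-}`. -/
def Dehyperplane.part {N n : ℕ} {T : Set (Euc N)} (P : Dehyperplane N n T) :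
    SignType → Set (Euc N)
  | .pos => P.plus
  | .zero => P.P
  | .neg => P.minus

/-- A face of `A`: a nonempty set of the form `⋂_{P ∈ A} P^{ε_P}`. -/
def IsFace {N n : ℕ} {T : Set (Euc N)} (A : Set (Dehyperplane N n T))
    (F : Set (Euc N)) : Prop :=
  F.Nonempty ∧ ∃ ε : Dehyperplane N n T → SignType, F = T ∩ ⋂ P ∈ A, P.part (ε P)

/-- A chamber of `A`: a face with `ε_P ≠ 0` for all `P ∈ A`. -/
def IsChamber {N n : ℕ} {T : Set (Euc N)} (A : Set (Dehyperplane N n T))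
    (F : Set (Euc N)) : Prop :=
  F.Nonempty ∧ ∃ ε : Dehyperplane N n T → SignType,
    (∀ P ∈ A, ε P ≠ 0) ∧ F = T ∩ ⋂ P ∈ A, P.part (ε P)

/-- The restriction `A^X = {P ∩ X | P ∈ A, X ⊄ P, P ∩ X ≠ ∅}`, as dehyperplanes in `X`
(viewed as an `m`-simanifold), with halves `P^± ∩ X`. -/
def restrict {N n : ℕ} {T : Set (Euc N)} (A : Set (Dehyperplane N n T)) (m : ℕ)
    (X : Set (Euc N)) : Set (Dehyperplane N m X) :=
  {Q | ∃ P ∈ A, ¬ X ⊆ P.P ∧ (P.P ∩ X).Nonempty ∧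
    Q.P = P.P ∩ X ∧ Q.plus = P.plus ∩ X ∧ Q.minus = P.minus ∩ X}

/-- The dimension of a subset of `ℝ^N`: the largest `i` such that `S` contains an
`i`-simanifold. -/
def sdim {N : ℕ} (S : Set (Euc N)) : ℕ :=
  sSup {i | ∃ T : Set (Euc N), IsSimanifold i T ∧ T ⊆ S}

/-!
Every flat `X` satisfies the Euler relation `∑ (-1) ^ dim F = (-1) ^ dim X` over the faces `F`
of the arrangement inside `X`, where `dim F` is the dimension of the flat spanned by `F`. The
chambers of the restriction to `X` are the faces spanning `X`, so Möbius inversion over the flats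
counts them.

For the Euler relation, add the dehyperplanes one at a time: a dehyperplane which cuts a cell
replaces it by a cell of the wall and two cells of full dimension. That both sides of the wall are
reached and connected comes from topology: the dimension of a simanifold is well defined, and a wall
has locally exactly two sides, each touching every nearby point of the wall (a local form of the
Jordan–Brouwer separation theorem). Both facts are proved with mod 2 cochains on finite lists of
points of small mesh, as in Alexander–Spanier cohomology: the Sperner cocycle generates the top
compactly supported cohomology of `ℝⁿ`.
-/

open Filter
open scoped Topology

variable {M M' : Type*}

/-! ### Cochains on lists of points -/

/-- Mod 2 Alexander–Spanier type cochains: functions of finite ordered lists of points. Only their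
values on lists of small diameter matter, and a list of `k + 1` points is a `k`-simplex. -/
abbrev ListCochain (M : Type*) := List M → ZMod 2

namespace ListCochain

/-- The simplicial coboundary; mod 2 there are no signs. -/
def coboundary : ListCochain M →ₗ[ZMod 2] ListCochain M where
  toFun Φ l := ∑ i ∈ Finset.range l.length, Φ (l.eraseIdx i)
  map_add' Φ Ψ := by ext l; simp [Finset.sum_add_distrib]
  map_smul' c Φ := by ext l; simp [Finset.mul_sum]

/-- The `i`-th simplex `r x₀, …, r xᵢ, s xᵢ, …, s xₖ` of the prism between `l.map r` and
`l.map s`. -/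
def prismList (r s : M → M') (l : List M) (i : ℕ) : List M' :=
  (l.take (i + 1)).map r ++ (l.drop i).map s

/-- The prism operator, a homotopy between the pullbacks along `r` and `s`. -/
def prism (r s : M → M') : ListCochain M' →ₗ[ZMod 2] ListCochain M where
  toFun Φ l := ∑ i ∈ Finset.range l.length, Φ (prismList r s l i)
  map_add' Φ Ψ := by ext l; simp [Finset.sum_add_distrib]
  map_smul' c Φ := by ext l; simp [Finset.mul_sum]

theorem coboundary_apply (Φ : ListCochain M) (l : List M) :
    coboundary Φ l = ∑ i ∈ Finset.range l.length, Φ (l.eraseIdx i) := rfl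

theorem prism_apply (r s : M → M') (Φ : ListCochain M') (l : List M) :
    prism r s Φ l = ∑ i ∈ Finset.range l.length, Φ (prismList r s l i) := rfl

@[simp] theorem coboundary_nil (Φ : ListCochain M) : coboundary Φ [] = 0 := rfl

@[simp] theorem prism_nil (r s : M → M') (Φ : ListCochain M') : prism r s Φ [] = 0 := rfl

theorem coboundary_cons (Φ : ListCochain M) (x : M) (l : List M) :
    coboundary Φ (x :: l) = Φ l + coboundary (fun l' => Φ (x :: l')) l := by
  simp [coboundary_apply, Finset.sum_range_succ', add_comm]

theorem prism_cons (r s : M → M') (Φ : ListCochain M') (x : M) (l : List M) :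
    prism r s Φ (x :: l) = Φ (r x :: s x :: l.map s) + prism r s (fun l' => Φ (r x :: l')) l := by
  simp [prism_apply, prismList, Finset.sum_range_succ', add_comm]

theorem coboundary_coboundary (Φ : ListCochain M) : coboundary (coboundary Φ) = 0 := by
  ext l
  induction l generalizing Φ with
  | nil => rfl
  | cons x l ih =>
    have h : (fun l' => coboundary Φ (x :: l')) = Φ + coboundary fun l' => Φ (x :: l') :=
      funext (coboundary_cons Φ x)
    rw [coboundary_cons, h, map_add, Pi.add_apply, ih, Pi.zero_apply, add_zero,
      CharTwo.add_self_eq_zero, Pi.zero_apply]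

theorem coboundary_comp_map (r : M → M') (Φ : ListCochain M') (l : List M) :
    coboundary (fun l' => Φ (l'.map r)) l = coboundary Φ (l.map r) := by
  simp [coboundary_apply, List.eraseIdx_map]

theorem coboundary_prism_add_prism_coboundary (r s : M → M') (Φ : ListCochain M') (l : List M) :
    coboundary (prism r s Φ) l + prism r s (coboundary Φ) l = Φ (l.map r) + Φ (l.map s) := by
  induction l generalizing Φ with
  | nil => simp [CharTwo.add_self_eq_zero]
  | cons x l ih =>
    have h₁ : (fun l' => prism r s Φ (x :: l')) =
        (fun l' => Φ (r x :: s x :: l'.map s)) + prism r s fun l' => Φ (r x :: l') :=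
      funext (prism_cons r s Φ x)
    have h₂ : (fun l' => coboundary Φ (r x :: l')) = Φ + coboundary fun l' => Φ (r x :: l') :=
      funext (coboundary_cons Φ (r x))
    rw [coboundary_cons, prism_cons, coboundary_cons, coboundary_cons, h₁, h₂, map_add, map_add,
      Pi.add_apply, Pi.add_apply, coboundary_comp_map s fun l' => Φ (r x :: s x :: l'),
      List.map_cons, List.map_cons]
    linear_combination ih (fun l' => Φ (r x :: l')) + CharTwo.add_self_eq_zero (prism r s Φ l) +
      CharTwo.add_self_eq_zero (coboundary (fun l' => Φ (r x :: s x :: l')) (l.map s)) +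
      CharTwo.add_self_eq_zero (Φ (r x :: l.map s))

theorem coboundary_congr {Φ Ψ : ListCochain M} {l : List M}
    (h : ∀ l' : List M, l'.Sublist l → l'.length + 1 = l.length → Φ l' = Ψ l') :
    coboundary Φ l = coboundary Ψ l :=
  Finset.sum_congr rfl fun _ hi =>
    h _ (List.eraseIdx_sublist ..) (List.length_eraseIdx_add_one (Finset.mem_range.1 hi))

theorem coboundary_eq_zero {Φ : ListCochain M} {l : List M}
    (h : ∀ l' : List M, l'.Sublist l → l'.length + 1 = l.length → Φ l' = 0) :
    coboundary Φ l = 0 :=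
  (coboundary_congr h).trans (congrFun (map_zero coboundary) l)

/-- The pullback of `Φ` along `f : M → M'` to lists in `K`, extended by zero. -/
def pullbackOn (K : Set M) (f : M → M') (Φ : ListCochain M') : ListCochain M :=
  open Classical in fun l => if ∀ z ∈ l, z ∈ K then Φ (l.map f) else 0

theorem pullbackOn_of_forall_mem {K : Set M} {l : List M} (hl : ∀ z ∈ l, z ∈ K) (f : M → M')
    (Φ : ListCochain M') : pullbackOn K f Φ l = Φ (l.map f) := by
  simp only [pullbackOn, if_pos hl]

theorem pullbackOn_eq_zero {K : Set M} {f : M → M'} {Φ : ListCochain M'} {l : List M}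
    (h : (∀ z ∈ l, z ∈ K) → Φ (l.map f) = 0) : pullbackOn K f Φ l = 0 := by
  rw [pullbackOn]
  split_ifs with hl
  exacts [h hl, rfl]

theorem pullbackOn_add (K : Set M) (f : M → M') (Φ Ψ : ListCochain M') :
    pullbackOn K f (Φ + Ψ) = pullbackOn K f Φ + pullbackOn K f Ψ := by
  ext l
  simp only [pullbackOn, Pi.add_apply]
  split_ifs <;> simp

theorem coboundary_pullbackOn_of_forall_mem {K : Set M} {l : List M} (hl : ∀ z ∈ l, z ∈ K)
    (f : M → M') (Φ : ListCochain M') :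
    coboundary (pullbackOn K f Φ) l = coboundary Φ (l.map f) := by
  rw [← coboundary_comp_map]
  exact coboundary_congr fun l' hl' _ =>
    pullbackOn_of_forall_mem (fun z hz => hl z (hl'.subset hz)) f Φ

theorem prism_eq_zero {r s : M → M'} {Φ : ListCochain M'} {l : List M}
    (h : ∀ i < l.length, Φ (prismList r s l i) = 0) : prism r s Φ l = 0 :=
  Finset.sum_eq_zero fun i hi => h i (Finset.mem_range.1 hi)

theorem length_prismList (r s : M → M') {l : List M} {i : ℕ} (hi : i < l.length) :
    (prismList r s l i).length = l.length + 1 := by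
  simp [prismList]; omega

theorem exists_of_mem_prismList {r s : M → M'} {l : List M} {i : ℕ} {z : M'}
    (hz : z ∈ prismList r s l i) : ∃ x ∈ l, z = r x ∨ z = s x := by
  simp only [prismList, List.mem_append, List.mem_map] at hz
  obtain ⟨x, hx, rfl⟩ | ⟨x, hx, rfl⟩ := hz
  · exact ⟨x, List.mem_of_mem_take hx, .inl rfl⟩
  · exact ⟨x, List.mem_of_mem_drop hx, .inr rfl⟩

theorem mem_prismList_or {x : M} {l : List M} (hx : x ∈ l) (r s : M → M') (i : ℕ) :
    r x ∈ prismList r s l i ∨ s x ∈ prismList r s l i := by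
  rw [← List.take_append_drop i l, List.mem_append] at hx
  rcases hx with hx | hx
  · exact .inl (List.mem_append_left _
      (List.mem_map_of_mem ((List.take_sublist_take_left i.le_succ).subset hx)))
  · exact .inr (List.mem_append_right _ (List.mem_map_of_mem hx))

theorem prismList_congr {r s r' s' : M → M'} {l : List M} (hr : ∀ x ∈ l, r x = r' x)
    (hs : ∀ x ∈ l, s x = s' x) (i : ℕ) : prismList r s l i = prismList r' s' l i :=
  congrArg₂ _ (List.map_congr_left fun x hx => hr x (List.mem_of_mem_take hx))
    (List.map_congr_left fun x hx => hs x (List.mem_of_mem_drop hx))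

/-! ### Small lists -/

/-- The points of `l` are pairwise at distance less than `ε`. -/
def IsSmall [PseudoMetricSpace M] (ε : ℝ) (l : List M) : Prop := ∀ x ∈ l, ∀ y ∈ l, dist x y < ε

section PseudoMetricSpace

variable [PseudoMetricSpace M] [PseudoMetricSpace M'] {ε ε' : ℝ} {l l' : List M}

theorem IsSmall.mono (hl : IsSmall ε l) (h : ε ≤ ε') : IsSmall ε' l :=
  fun x hx y hy => (hl x hx y hy).trans_le h

theorem IsSmall.sublist (hl : IsSmall ε l) (h : l'.Sublist l) : IsSmall ε l' :=
  fun x hx y hy => hl x (h.subset hx) y (h.subset hy)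

theorem IsSmall.map {f : M → M'} (hl : IsSmall ε l)
    (h : ∀ x ∈ l, ∀ y ∈ l, dist x y < ε → dist (f x) (f y) < ε') : IsSmall ε' (l.map f) := by
  intro _ hx' _ hy'
  obtain ⟨x, hx, rfl⟩ := List.mem_map.1 hx'
  obtain ⟨y, hy, rfl⟩ := List.mem_map.1 hy'
  exact h x hx y hy (hl x hx y hy)

theorem IsSmall.prismList {r s : M → M'} (hl : IsSmall ε l)
    (h : ∀ x ∈ l, ∀ y ∈ l, dist x y < ε →
      dist (r x) (r y) < ε' ∧ dist (r x) (s y) < ε' ∧ dist (s x) (s y) < ε') (i : ℕ) :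
    IsSmall ε' (prismList r s l i) := by
  intro z hz w hw
  obtain ⟨x, hx, hzx⟩ := exists_of_mem_prismList hz
  obtain ⟨y, hy, hwy⟩ := exists_of_mem_prismList hw
  obtain ⟨hrr, hrs, hss⟩ := h x hx y hy (hl x hx y hy)
  obtain ⟨-, hrs', -⟩ := h y hy x hx (hl y hy x hx)
  rcases hzx with rfl | rfl <;> rcases hwy with rfl | rfl
  · exact hrr
  · exact hrs
  · rwa [dist_comm]
  · exact hss

variable (M) in
/-- The filter of lists of points of diameter tending to zero. -/
def smallLists : Filter (List M) := ⨅ ε > (0 : ℝ), 𝓟 {l | IsSmall ε l}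

theorem eventually_smallLists {p : List M → Prop} :
    (∀ᶠ l in smallLists M, p l) ↔ ∃ ε > 0, ∀ l, IsSmall ε l → p l := by
  refine (hasBasis_biInf_principal ?_ ⟨1, one_pos⟩).eventually_iff
  intro ε hε ε' hε'
  exact ⟨min ε ε', lt_min (show 0 < ε from hε) hε', fun l hl => hl.mono (min_le_left ..),
    fun l hl => hl.mono (min_le_right ..)⟩

theorem eventually_isSmall (hε : 0 < ε) : ∀ᶠ l in smallLists M, IsSmall ε l :=
  eventually_smallLists.2 ⟨ε, hε, fun _ => id⟩

theorem eventually_smallLists_map {K : Set M} {f : M → M'} (hf : UniformContinuousOn f K)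
    {p : List M' → Prop} (hp : ∀ᶠ l in smallLists M', p l) :
    ∀ᶠ l in smallLists M, (∀ z ∈ l, z ∈ K) → p (l.map f) := by
  obtain ⟨ε, hε, hp⟩ := eventually_smallLists.1 hp
  obtain ⟨δ, hδ, hf⟩ := Metric.uniformContinuousOn_iff.1 hf ε hε
  exact eventually_smallLists.2 ⟨δ, hδ, fun l hl hlK =>
    hp _ (hl.map fun x hx y hy => hf x (hlK x hx) y (hlK y hy))⟩

theorem tendsto_map_smallLists {f : M → M'} (hf : UniformContinuous f) :
    Tendsto (List.map f) (smallLists M) (smallLists M') := fun _ hp =>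
  (eventually_smallLists_map (uniformContinuousOn_univ.2 hf) hp).mono fun _ hl => hl (by simp)

theorem eventually_forall_sublist {p : List M → Prop} (h : ∀ᶠ l in smallLists M, p l) :
    ∀ᶠ l in smallLists M, ∀ l' : List M, l'.Sublist l → p l' := by
  obtain ⟨ε, hε, h⟩ := eventually_smallLists.1 h
  exact eventually_smallLists.2 ⟨ε, hε, fun l hl l' hl' => h l' (hl.sublist hl')⟩

end PseudoMetricSpace

/-! ### The Sperner cocycle -/

section Sperner

variable {C : Type*} [DecidableEq C]

/-- The indicator function of the lists that enumerate `S` without repetition. -/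
def enumeration (S : Finset C) : ListCochain C := fun l => if l.Nodup ∧ l.toFinset = S then 1 else 0

theorem enumeration_ne_zero {S : Finset C} {l : List C} :
    enumeration S l ≠ 0 ↔ l.Nodup ∧ l.toFinset = S := by
  simp [enumeration]

theorem enumeration_cons (S : Finset C) (x : C) (l : List C) :
    enumeration S (x :: l) = if x ∈ S then enumeration (S.erase x) l else 0 := by
  have h : (x :: l).Nodup ∧ (x :: l).toFinset = S ↔
      x ∈ S ∧ l.Nodup ∧ l.toFinset = S.erase x := by
    rw [List.nodup_cons, List.toFinset_cons, ← List.mem_toFinset]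
    constructor
    · rintro ⟨⟨hx, hl⟩, rfl⟩
      exact ⟨Finset.mem_insert_self .., hl, (Finset.erase_insert hx).symm⟩
    · rintro ⟨hx, hl, h⟩
      simp [h, hx, hl]
  simp only [enumeration, h, ite_and]

theorem coboundary_enumeration [Fintype C] (S : Finset C) (l : List C) :
    coboundary (enumeration S) l = ∑ y ∈ Sᶜ, enumeration (insert y S) l := by
  induction l generalizing S with
  | nil => simp [enumeration, eq_comm (a := ∅)]
  | cons x l ih =>
    rw [coboundary_cons]
    by_cases hx : x ∈ S
    · have hcons : (fun l' => enumeration S (x :: l')) = enumeration (S.erase x) := by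
        ext l'; simp [enumeration_cons, hx]
      rw [hcons, ih, Finset.compl_erase, Finset.sum_insert (by simp [hx]), Finset.insert_erase hx,
        ← add_assoc, CharTwo.add_self_eq_zero, zero_add]
      refine Finset.sum_congr rfl fun y hy => ?_
      have hyx : y ≠ x := fun h => Finset.mem_compl.1 hy (h ▸ hx)
      simp [enumeration_cons, hx, Finset.erase_insert_of_ne hyx]
    · have hcons : (fun l' => enumeration S (x :: l')) = 0 := by
        ext l'; simp [enumeration_cons, hx]
      rw [hcons, map_zero, Pi.zero_apply, add_zero, Finset.sum_eq_single_of_mem x (by simpa)]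
      · simp [enumeration_cons, Finset.erase_insert hx]
      · intro y _ hyx
        simp [enumeration_cons, hx, hyx.symm]

theorem enumeration_map {D : Type*} [DecidableEq D] (f : C ↪ D) (S : Finset C) (l : List C) :
    enumeration (S.map f) (l.map f) = enumeration S l := by
  have h : (l.map f).toFinset = l.toFinset.map f := by ext; simp
  simp only [enumeration, List.nodup_map_iff f.injective, h, Finset.map_inj]

/-- The index of the first negative coordinate of `x`, or `n` if there is none. -/
def firstNeg : {n : ℕ} → (Fin n → ℝ) → Fin (n + 1)
  | 0, _ => 0
  | _ + 1, x => if x 0 < 0 then 0 else (firstNeg (Fin.tail x)).succ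

variable {n : ℕ}

theorem firstNeg_succ (x : Fin (n + 1) → ℝ) :
    firstNeg x = if x 0 < 0 then 0 else (firstNeg (Fin.tail x)).succ := by
  rw [firstNeg]

theorem nonneg_of_firstNeg_eq_last {x : Fin n → ℝ} (h : firstNeg x = Fin.last n) (i : Fin n) :
    0 ≤ x i := by
  induction n with
  | zero => exact i.elim0
  | succ n ih =>
    rw [firstNeg_succ] at h
    split_ifs at h with hx
    · exact absurd h.symm Fin.last_pos.ne'
    · rw [← Fin.succ_last] at h
      exact Fin.cases (not_lt.1 hx) (ih (Fin.succ_injective _ h)) i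

theorem neg_of_firstNeg_eq_castSucc {x : Fin n → ℝ} {i : Fin n} (h : firstNeg x = i.castSucc) :
    x i < 0 := by
  induction n with
  | zero => exact i.elim0
  | succ n ih =>
    rw [firstNeg_succ] at h
    split_ifs at h with hx
    · rwa [← Fin.castSucc_injective _ (Fin.castSucc_zero.trans h)]
    · cases i using Fin.cases with
      | zero => simp at h
      | succ j => exact ih (x := Fin.tail x) (Fin.succ_injective _ (by rw [h, Fin.succ_castSucc]))

/-- The Sperner cocycle of `ℝⁿ` at `p`: it counts the simplices whose vertices carry all `n + 1`
labels. It represents the generator of the top compactly supported cohomology of `ℝⁿ`. -/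
def sperner (p : Fin n → ℝ) : ListCochain (Fin n → ℝ) :=
  fun l => enumeration Finset.univ (l.map fun x => firstNeg (x - p))

theorem coboundary_sperner (p : Fin n → ℝ) : coboundary (sperner p) = 0 := by
  ext l
  refine (coboundary_comp_map (fun x => firstNeg (x - p)) (enumeration Finset.univ) l).trans ?_
  simp [coboundary_enumeration]

variable {p : Fin n → ℝ} {l : List (Fin n → ℝ)}

theorem nodup_of_sperner_ne_zero (h : sperner p l ≠ 0) : l.Nodup :=
  (enumeration_ne_zero.1 h).1.of_map _

theorem exists_mem_firstNeg_eq (h : sperner p l ≠ 0) (c : Fin (n + 1)) :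
    ∃ x ∈ l, firstNeg (x - p) = c := by
  have := (enumeration_ne_zero.1 h).2 ▸ Finset.mem_univ c
  simpa using this

theorem length_eq_of_sperner_ne_zero (h : sperner p l ≠ 0) : l.length = n + 1 := by
  obtain ⟨hl, hS⟩ := enumeration_ne_zero.1 h
  simpa [hS] using (List.toFinset_card_of_nodup hl).symm

theorem dist_lt_of_sperner_ne_zero {ε : ℝ} (hl : IsSmall ε l) (h : sperner p l ≠ 0) {x : Fin n → ℝ}
    (hx : x ∈ l) : dist x p < ε := by
  rw [dist_pi_lt_iff (dist_nonneg.trans_lt (hl x hx x hx))]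
  intro i
  obtain ⟨u, hu, hu'⟩ := exists_mem_firstNeg_eq h (Fin.last n)
  obtain ⟨v, hv, hv'⟩ := exists_mem_firstNeg_eq h i.castSucc
  have hu_nonneg : 0 ≤ u i - p i := nonneg_of_firstNeg_eq_last hu' i
  have hv_neg : v i - p i < 0 := neg_of_firstNeg_eq_castSucc hv'
  have hxu := abs_lt.1 ((dist_le_pi_dist x u i).trans_lt (hl x hx u hu))
  have hxv := abs_lt.1 ((dist_le_pi_dist x v i).trans_lt (hl x hx v hv))
  rw [Real.dist_eq, abs_lt]
  constructor <;> linarith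

end Sperner

/-- The concatenation of the prisms between consecutive members of a sequence of maps. -/
def telescope (ρ : ℕ → M → M') (m : ℕ) : ListCochain M' →ₗ[ZMod 2] ListCochain M :=
  ∑ a ∈ Finset.range m, prism (ρ a) (ρ (a + 1))

theorem telescope_apply (ρ : ℕ → M → M') (m : ℕ) (Φ : ListCochain M') (l : List M) :
    telescope ρ m Φ l = ∑ a ∈ Finset.range m, prism (ρ a) (ρ (a + 1)) Φ l := by
  simp [telescope]

@[simp] theorem telescope_nil (ρ : ℕ → M → M') (m : ℕ) (Φ : ListCochain M') :
    telescope ρ m Φ [] = 0 := by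
  simp [telescope_apply]

theorem coboundary_telescope_add_telescope_coboundary (ρ : ℕ → M → M') (m : ℕ)
    (Φ : ListCochain M') (l : List M) :
    coboundary (telescope ρ m Φ) l + telescope ρ m (coboundary Φ) l =
      Φ (l.map (ρ 0)) + Φ (l.map (ρ m)) := by
  have hprism (a : ℕ) := coboundary_prism_add_prism_coboundary (ρ a) (ρ (a + 1)) Φ l
  have htele := Finset.sum_range_sub (fun a => Φ (l.map (ρ a))) m
  simp only [CharTwo.sub_eq_add] at htele
  simp only [telescope, LinearMap.sum_apply, map_sum, Finset.sum_apply, ← Finset.sum_add_distrib,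
    hprism]
  rw [add_comm (Φ _) (Φ _), ← htele]
  exact Finset.sum_congr rfl fun _ _ => add_comm _ _

theorem telescope_congr {ρ : ℕ → M → M'} {m : ℕ} {Φ Ψ : ListCochain M'} {l : List M}
    (h : ∀ a < m, ∀ i < l.length,
      Φ (prismList (ρ a) (ρ (a + 1)) l i) = Ψ (prismList (ρ a) (ρ (a + 1)) l i)) :
    telescope ρ m Φ l = telescope ρ m Ψ l := by
  simp only [telescope_apply, prism_apply]
  exact Finset.sum_congr rfl fun a ha => Finset.sum_congr rfl fun i hi =>
    h a (Finset.mem_range.1 ha) i (Finset.mem_range.1 hi)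

theorem telescope_eq_zero {ρ : ℕ → M → M'} {m : ℕ} {Φ : ListCochain M'} {l : List M}
    (h : ∀ a < m, ∀ i < l.length, Φ (prismList (ρ a) (ρ (a + 1)) l i) = 0) :
    telescope ρ m Φ l = 0 :=
  (telescope_apply ..).trans
    (Finset.sum_eq_zero fun a ha => prism_eq_zero (h a (Finset.mem_range.1 ha)))

/-! ### Compactly supported cochains -/

section NormedAddCommGroup

variable {E : Type*} [NormedAddCommGroup E] {R R' ε : ℝ} {k : ℕ} {Φ : ListCochain E}

/-- `Φ` vanishes on the `ε`-small lists that are not contained in the open ball of radius `R`. -/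
def VanishesOutside (R ε : ℝ) (Φ : ListCochain E) : Prop :=
  ∀ l, IsSmall ε l → (∃ z ∈ l, R ≤ ‖z‖) → Φ l = 0

variable (E) in
/-- The cochains on lists of `k` points that, on small lists, are supported in the open ball of
radius `R`. The value on the empty list is zero, as these are not augmented cochains. -/
def supportedCochains (R : ℝ) (k : ℕ) : Submodule (ZMod 2) (ListCochain E) where
  carrier := {Φ | (∀ l, l.length ≠ k → Φ l = 0) ∧ Φ [] = 0 ∧
    ∀ᶠ l in smallLists E, (∃ z ∈ l, R ≤ ‖z‖) → Φ l = 0}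
  add_mem' := by
    rintro Φ Ψ ⟨hΦ, hΦ₀, hΦR⟩ ⟨hΨ, hΨ₀, hΨR⟩
    refine ⟨fun l hl => by simp [hΦ l hl, hΨ l hl], by simp [hΦ₀, hΨ₀], ?_⟩
    filter_upwards [hΦR, hΨR] with l h₁ h₂ hz
    simp [h₁ hz, h₂ hz]
  zero_mem' := by simp
  smul_mem' := by
    rintro c Φ ⟨hΦ, hΦ₀, hΦR⟩
    refine ⟨fun l hl => by simp [hΦ l hl], by simp [hΦ₀], ?_⟩
    filter_upwards [hΦR] with l h hz
    simp [h hz]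

theorem supportedCochains_mono (h : R ≤ R') : supportedCochains E R k ≤ supportedCochains E R' k :=
  fun _ ⟨hΦ, hΦ₀, hΦR⟩ => ⟨hΦ, hΦ₀, hΦR.mono fun _ hl ⟨z, hz, hz'⟩ => hl ⟨z, hz, h.trans hz'⟩⟩

end NormedAddCommGroup

/-! ### The Sperner cocycle is not the coboundary of a compactly supported cochain -/

section Slices

variable {n : ℕ}

/-- The inclusion of `ℝⁿ` as the slice `{a} × ℝⁿ` of `ℝⁿ⁺¹`. -/
def slice (a : ℝ) (y : Fin n → ℝ) : Fin (n + 1) → ℝ := Fin.cons a y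

@[simp] theorem slice_tail (z : Fin (n + 1) → ℝ) : slice (z 0) (Fin.tail z) = z :=
  Fin.cons_self_tail z

theorem dist_eq_max_tail (z w : Fin (n + 1) → ℝ) :
    dist z w = max (dist (z 0) (w 0)) (dist (Fin.tail z) (Fin.tail w)) := by
  refine eq_of_forall_ge_iff fun c => ?_
  rw [max_le_iff]
  rcases lt_or_ge c 0 with hc | hc
  · exact iff_of_false (hc.trans_le dist_nonneg).not_ge
      fun h => (hc.trans_le dist_nonneg).not_ge h.1
  · simp only [dist_pi_le_iff hc, Fin.forall_fin_succ, Fin.tail]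

theorem norm_eq_max_tail (z : Fin (n + 1) → ℝ) : ‖z‖ = max |z 0| ‖Fin.tail z‖ := by
  rw [← dist_zero_right z, dist_eq_max_tail z 0, ← dist_zero_right (Fin.tail z), Pi.zero_apply,
    dist_zero_right, Real.norm_eq_abs]
  rfl

theorem dist_tail_le (z w : Fin (n + 1) → ℝ) : dist (Fin.tail z) (Fin.tail w) ≤ dist z w :=
  dist_eq_max_tail z w ▸ le_max_right _ _

theorem dist_slice_slice (a b : ℝ) (y z : Fin n → ℝ) :
    dist (slice a y) (slice b z) = max |a - b| (dist y z) :=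
  dist_eq_max_tail _ _

theorem norm_slice (a : ℝ) (y : Fin n → ℝ) : ‖slice a y‖ = max |a| ‖y‖ :=
  norm_eq_max_tail _

/-- `s 0 ≤ s 1 ≤ ⋯ ≤ s m` is a subdivision of `[-R, R]` of mesh less than `ε`. -/
structure IsGrid (R ε : ℝ) (m : ℕ) (s : ℕ → ℝ) : Prop where
  zero : s 0 = -R
  last : s m = R
  mesh : ∀ a, |s a - s (a + 1)| < ε
  mono : Monotone s

variable {R ε : ℝ} {m : ℕ} {s : ℕ → ℝ} {Φ Ψ : ListCochain (Fin (n + 1) → ℝ)}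

theorem exists_isGrid (hR : 0 < R) (hε : 0 < ε) : ∃ m s, IsGrid R ε m s := by
  obtain ⟨m, hm⟩ := exists_nat_gt (2 * R / ε)
  have hm₀ : (0 : ℝ) < m := lt_trans (by positivity) hm
  have hstep : 0 < 2 * R / m := by positivity
  refine ⟨m, fun a => -R + a * (2 * R / m), by simp, by field_simp; ring, fun a => ?_,
    monotone_nat_of_le_succ fun a => by push_cast; linarith⟩
  rw [Nat.cast_succ, add_one_mul, ← add_assoc, sub_add_cancel_left, abs_neg, abs_of_pos hstep]
  exact (div_lt_comm₀ hε hm₀).1 hm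

namespace IsGrid

variable (hs : IsGrid R ε m s)
include hs

theorem isSmall_prismList {l : List (Fin n → ℝ)} (hl : IsSmall ε l) (a i : ℕ) :
    IsSmall ε (prismList (slice (s a)) (slice (s (a + 1))) l i) := by
  refine hl.prismList (fun x _ y _ hxy => ?_) i
  simp [dist_slice_slice, hxy, hs.mesh a]

theorem telescope_slice_congr (h : ∀ l, IsSmall ε l → Φ l = Ψ l) {l : List (Fin n → ℝ)}
    (hl : IsSmall ε l) :
    telescope (fun a => slice (s a)) m Φ l = telescope (fun a => slice (s a)) m Ψ l :=
  telescope_congr fun a _ i _ => h _ (hs.isSmall_prismList hl a i)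

theorem vanishesOutside_telescope_slice (hΦ : VanishesOutside R ε Φ) :
    VanishesOutside R ε (telescope (fun a => slice (s a)) m Φ) := by
  rintro l hl ⟨z, hz, hzR⟩
  refine telescope_eq_zero fun a _ i _ => hΦ _ (hs.isSmall_prismList hl a i) ?_
  rcases mem_prismList_or hz (slice (s a)) (slice (s (a + 1))) i with h | h
  all_goals exact ⟨_, h, norm_slice _ z ▸ hzR.trans (le_max_right ..)⟩

theorem coboundary_telescope_slice (hΦ₀ : Φ [] = 0) (hΦ : VanishesOutside R ε Φ)
    {l : List (Fin n → ℝ)} (hl : IsSmall ε l) :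
    coboundary (telescope (fun a => slice (s a)) m Φ) l =
      telescope (fun a => slice (s a)) m (coboundary Φ) l := by
  have hsmall (b : ℝ) : IsSmall ε (l.map (slice b)) :=
    hl.map fun x _ y _ h => by simpa [dist_slice_slice]
  have hend (b : ℝ) (hb : R ≤ |b|) : Φ (l.map (slice b)) = 0 := by
    cases l with
    | nil => exact hΦ₀
    | cons y l =>
      refine hΦ _ (hsmall b) ⟨slice b y, by simp, ?_⟩
      exact norm_slice b y ▸ hb.trans (le_max_left ..)
  have h := coboundary_telescope_add_telescope_coboundary (fun a => slice (s a)) m Φ l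
  rw [hend _ (by rw [hs.zero, abs_neg]; exact le_abs_self R),
    hend _ (by rw [hs.last]; exact le_abs_self R), add_zero] at h
  exact CharTwo.add_eq_zero.1 h

theorem telescope_slice_mem_supportedCochains {k : ℕ}
    (hΦ : Φ ∈ supportedCochains (Fin (n + 1) → ℝ) R (k + 1)) (hΦε : VanishesOutside R ε Φ) :
    telescope (fun a => slice (s a)) m Φ ∈ supportedCochains (Fin n → ℝ) R k := by
  refine ⟨fun l hl => telescope_eq_zero fun a _ i hi => hΦ.1 _ ?_, telescope_nil .., ?_⟩
  · rwa [length_prismList _ _ hi, Ne, Nat.add_right_cancel_iff]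
  · exact eventually_smallLists.2
      ⟨ε, (abs_nonneg _).trans_lt (hs.mesh 0), hs.vanishesOutside_telescope_slice hΦε⟩

end IsGrid

theorem sperner_zero_apply (l : List (Fin n → ℝ)) :
    sperner 0 l = enumeration Finset.univ (l.map firstNeg) := by
  simp [sperner]

theorem firstNeg_slice (a : ℝ) (y : Fin n → ℝ) :
    firstNeg (slice a y) = if a < 0 then 0 else (firstNeg y).succ :=
  firstNeg_succ _

theorem sperner_slice_cons_slice {a : ℝ} (ha : a < 0) (y y' : Fin n → ℝ)
    (l : List (Fin (n + 1) → ℝ)) : sperner 0 (slice a y :: slice a y' :: l) = 0 := by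
  by_contra h
  rw [sperner_zero_apply] at h
  simpa [firstNeg_slice, ha] using (enumeration_ne_zero.1 h).1

theorem sperner_slice_cons_map_slice {a b : ℝ} (ha : a < 0) (hb : 0 ≤ b) (y : Fin n → ℝ)
    (l : List (Fin n → ℝ)) : sperner 0 (slice a y :: l.map (slice b)) = sperner 0 l := by
  have hcolors : (slice a y :: l.map (slice b)).map firstNeg =
      0 :: (l.map firstNeg).map (Fin.succEmb (n + 1)) := by
    simp [firstNeg_slice, ha, hb.not_gt, Function.comp_def]
  have huniv : (Finset.univ : Finset (Fin (n + 1 + 1))).erase 0 =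
      Finset.univ.map (Fin.succEmb (n + 1)) := by
    ext c; cases c using Fin.cases <;> simp
  rw [sperner_zero_apply, sperner_zero_apply, hcolors, enumeration_cons, huniv]
  simpa using enumeration_map (Fin.succEmb (n + 1)) Finset.univ (l.map firstNeg)

theorem prism_slice_sperner {a b : ℝ} (hab : a ≤ b) (l : List (Fin n → ℝ)) :
    prism (slice a) (slice b) (sperner 0) l = if a < 0 ∧ 0 ≤ b then sperner 0 l else 0 := by
  by_cases hb : b < 0
  · rw [if_neg (by simp [hb])]
    refine prism_eq_zero fun i _ => by_contra fun h => ?_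
    obtain ⟨z, hz, hz'⟩ := exists_mem_firstNeg_eq h (Fin.last _)
    obtain ⟨x, -, rfl | rfl⟩ := exists_of_mem_prismList hz <;>
      simp [firstNeg_slice, hb, hab.trans_lt hb, Fin.last_pos.ne] at hz'
  by_cases ha : a < 0
  · rw [if_pos ⟨ha, not_lt.1 hb⟩]
    rcases l with _ | ⟨y, _ | ⟨y', l⟩⟩
    · simp [sperner_zero_apply, enumeration, Finset.univ_nonempty.ne_empty.symm]
    all_goals rw [prism_cons, ← List.map_cons, sperner_slice_cons_map_slice ha (not_lt.1 hb)]
    · simp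
    · exact add_eq_left.2 (prism_eq_zero fun i _ => sperner_slice_cons_slice ha y y' _)
  · rw [if_neg (by simp [ha])]
    refine prism_eq_zero fun i _ => by_contra fun h => ?_
    obtain ⟨z, hz, hz'⟩ := exists_mem_firstNeg_eq h 0
    obtain ⟨x, -, rfl | rfl⟩ := exists_of_mem_prismList hz <;>
      simp [firstNeg_slice, ha, hb] at hz'

theorem telescope_slice_sperner (hs : Monotone s) (h₀ : s 0 < 0) (m : ℕ) (l : List (Fin n → ℝ)) :
    telescope (fun a => slice (s a)) m (sperner 0) l = if s m < 0 then 0 else sperner 0 l := by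
  induction m with
  | zero => simp [telescope_apply, h₀]
  | succ m ih =>
    have hm := hs m.le_succ
    rw [telescope_apply] at ih ⊢
    rw [Finset.sum_range_succ, ih, prism_slice_sperner hm]
    grind [Nat.succ_eq_add_one]

theorem coboundary_not_eventuallyEq_sperner_zero {n : ℕ} {R : ℝ} (hR : 0 < R)
    {Ψ : ListCochain (Fin n → ℝ)} (hΨ : Ψ ∈ supportedCochains (Fin n → ℝ) R n) :
    ¬ coboundary Ψ =ᶠ[smallLists _] sperner 0 := by
  intro h
  induction n with
  | zero =>
    obtain ⟨ε, hε, hcob⟩ := eventually_smallLists.1 h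
    have hpoint := hcob [0] fun x _ y _ => by simpa [Subsingleton.elim x y] using hε
    simp [coboundary_cons, hΨ.2.1, sperner, enumeration, firstNeg] at hpoint
  | succ n ih =>
    obtain ⟨ε, hε, hε'⟩ := eventually_smallLists.1 (h.and hΨ.2.2)
    obtain ⟨hcob, hvanish⟩ := forall₂_and.1 hε'
    obtain ⟨m, s, hs⟩ := exists_isGrid hR hε
    refine ih (hs.telescope_slice_mem_supportedCochains hΨ hvanish) ?_
    filter_upwards [eventually_isSmall hε] with l hl
    rw [hs.coboundary_telescope_slice hΨ.2.1 hvanish hl, hs.telescope_slice_congr hcob hl,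
      telescope_slice_sperner hs.mono (by simpa [hs.zero]), hs.last, if_neg hR.not_gt]

theorem coboundary_not_eventuallyEq_sperner {n : ℕ} {R : ℝ} (p : Fin n → ℝ)
    {Ψ : ListCochain (Fin n → ℝ)} (hΨ : Ψ ∈ supportedCochains (Fin n → ℝ) R n) :
    ¬ coboundary Ψ =ᶠ[smallLists _] sperner p := by
  intro h
  have hmap := tendsto_map_smallLists (uniformContinuous_add_right p)
  refine coboundary_not_eventuallyEq_sperner_zero (R := |R| + ‖p‖ + 1) (by positivity)
    (Ψ := fun l => Ψ (l.map (· + p))) ⟨fun l hl => hΨ.1 _ (by simpa), hΨ.2.1, ?_⟩ ?_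
  · filter_upwards [hmap.eventually hΨ.2.2] with l hl ⟨z, hz, hzR⟩
    refine hl ⟨z + p, List.mem_map_of_mem hz, ?_⟩
    have := norm_sub_le (z + p) p
    rw [add_sub_cancel_right] at this
    linarith [le_abs_self R]
  · filter_upwards [hmap.eventually h] with l hl
    rw [coboundary_comp_map (· + p) Ψ, hl]
    simp [sperner, Function.comp_def]

end Slices
/-! ### The top compactly supported cohomology of `ℝⁿ` has rank at most one -/

section Poincare

variable {n k m : ℕ} {R R₁ R₂ ε : ℝ} {s : ℕ → ℝ}
  {Φ : ListCochain (Fin (n + 1) → ℝ)} {χ : ListCochain (Fin n → ℝ)}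

theorem uniformContinuous_tail :
    UniformContinuous (Fin.tail : (Fin (n + 1) → ℝ) → (Fin n → ℝ)) :=
  Metric.uniformContinuous_iff.2 fun ε hε => ⟨ε, hε, fun _ _ h => (dist_tail_le _ _).trans_lt h⟩

/-- The map that replaces the first coordinate `z 0` by `min (z 0) s`. -/
def clip (s : ℝ) (z : Fin (n + 1) → ℝ) : Fin (n + 1) → ℝ := slice (min (z 0) s) (Fin.tail z)

theorem clip_of_le {s : ℝ} {z : Fin (n + 1) → ℝ} (h : z 0 ≤ s) : clip s z = z := by
  rw [clip, min_eq_left h, slice_tail]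

theorem clip_of_ge {s : ℝ} {z : Fin (n + 1) → ℝ} (h : s ≤ z 0) :
    clip s z = slice s (Fin.tail z) := by
  rw [clip, min_eq_right h]

theorem dist_clip_clip_lt {a b : ℝ} (hab : |a - b| < ε) {z w : Fin (n + 1) → ℝ}
    (h : dist z w < ε) : dist (clip a z) (clip b w) < ε := by
  rw [dist_eq_max_tail, max_lt_iff] at h
  rw [clip, clip, dist_slice_slice, max_lt_iff]
  exact ⟨(abs_min_sub_min_le_max ..).trans_lt (max_lt h.1 hab), h.2⟩

theorem isSmall_map_clip {l : List (Fin (n + 1) → ℝ)} (hl : IsSmall ε l) (a : ℝ) :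
    IsSmall ε (l.map (clip a)) :=
  hl.map fun _ _ _ _ h => dist_clip_clip_lt (by simpa using dist_nonneg.trans_lt h) h

namespace IsGrid

variable (hs : IsGrid R ε m s) {l : List (Fin (n + 1) → ℝ)} (hl : IsSmall ε l)
include hs hl

theorem isSmall_prismList_clip (a i : ℕ) :
    IsSmall ε (prismList (clip (s a)) (clip (s (a + 1))) l i) := by
  refine hl.prismList (fun x _ y _ hxy => ?_) i
  have hself (a : ℝ) : |a - a| < ε := by simpa using dist_nonneg.trans_lt hxy
  exact ⟨dist_clip_clip_lt (hself _) hxy, dist_clip_clip_lt (hs.mesh a) hxy,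
    dist_clip_clip_lt (hself _) hxy⟩

theorem apply_map_clip_zero (hΦ₀ : Φ [] = 0) (hΦ : VanishesOutside R ε Φ) :
    Φ (l.map (clip (s 0))) = 0 := by
  cases l with
  | nil => exact hΦ₀
  | cons z l =>
    refine hΦ _ (isSmall_map_clip hl _) ⟨clip (s 0) z, by simp, ?_⟩
    have hle : min (z 0) (s 0) ≤ -R := hs.zero ▸ min_le_right ..
    rw [clip, norm_slice]
    exact le_max_of_le_left (le_abs.2 (.inr (by linarith)))

theorem apply_map_clip_last (hΦ : VanishesOutside R ε Φ) : Φ (l.map (clip (s m))) = Φ l := by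
  rw [hs.last]
  by_cases h : ∀ z ∈ l, z 0 ≤ R
  · rw [List.map_congr_left fun z hz => clip_of_le (h z hz), List.map_id']
  · push Not at h
    obtain ⟨z, hz, hzR⟩ := h
    rw [hΦ l hl ⟨z, hz, ?_⟩,
      hΦ _ (isSmall_map_clip hl R) ⟨clip R z, List.mem_map_of_mem hz, ?_⟩]
    · rw [clip_of_ge hzR.le, norm_slice]
      exact le_max_of_le_left (le_abs_self R)
    · rw [norm_eq_max_tail]
      exact le_max_of_le_left (hzR.le.trans (le_abs_self _))

theorem coboundary_telescope_clip (hΦ₀ : Φ [] = 0) (hΦ : VanishesOutside R ε Φ)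
    (hcob : ∀ l, IsSmall ε l → coboundary Φ l = 0) :
    coboundary (telescope (fun a => clip (s a)) m Φ) l = Φ l := by
  have h := coboundary_telescope_add_telescope_coboundary (fun a => clip (s a)) m Φ l
  rwa [telescope_eq_zero fun a _ i _ => hcob _ (hs.isSmall_prismList_clip hl a i),
    hs.apply_map_clip_zero hl hΦ₀ hΦ, hs.apply_map_clip_last hl hΦ, add_zero, zero_add] at h

theorem telescope_clip_eq_zero (hΦ : VanishesOutside R ε Φ) {z : Fin (n + 1) → ℝ}
    (hz : z ∈ l) (hzR : z 0 ≤ -R ∨ R ≤ ‖Fin.tail z‖) :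
    telescope (fun a => clip (s a)) m Φ l = 0 := by
  have hclip (b : ℕ) : R ≤ ‖clip (s b) z‖ := by
    rw [clip, norm_slice, le_max_iff]
    refine hzR.imp_left fun h => ?_
    have : min (z 0) (s b) ≤ -R := (min_le_left ..).trans h
    exact le_abs.2 (.inr (by linarith))
  refine telescope_eq_zero fun a _ i _ => hΦ _ (hs.isSmall_prismList_clip hl a i) ?_
  rcases mem_prismList_or hz (clip (s a)) (clip (s (a + 1))) i with h | h
  all_goals exact ⟨_, h, hclip _⟩

omit hl in
theorem telescope_clip_of_forall_le (hlR : ∀ z ∈ l, R ≤ z 0) :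
    telescope (fun a => clip (s a)) m Φ l =
      telescope (fun a => slice (s a)) m Φ (l.map Fin.tail) := by
  have hclip (b : ℕ) (hb : b ≤ m) (z) (hz : z ∈ l) : clip (s b) z = slice (s b) (Fin.tail z) :=
    clip_of_ge ((hs.mono hb).trans (hs.last.trans_le (hlR z hz)))
  rw [telescope_apply, telescope_apply]
  refine Finset.sum_congr rfl fun a ha => ?_
  have ha' := Finset.mem_range.1 ha
  rw [prism_apply, prism_apply, List.length_map]
  refine Finset.sum_congr rfl fun i _ => congrArg Φ ?_
  rw [prismList_congr (hclip a ha'.le) (hclip (a + 1) ha')]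
  simp [prismList, Function.comp_def]

end IsGrid

/-- The pullback of `χ` to the half cylinder `R ≤ z 0`, extended by zero. -/
def cylinder (R : ℝ) (χ : ListCochain (Fin n → ℝ)) : ListCochain (Fin (n + 1) → ℝ) :=
  pullbackOn {z | R ≤ z 0} Fin.tail χ

theorem IsGrid.eventually_telescope_clip_add_coboundary_cylinder_eq_zero (hs : IsGrid R ε m s)
    (hR : 0 < R) (hR₁ : R < R₁) (hR₂ : R₁ < R₂) (hΦ : VanishesOutside R ε Φ)
    (hχ : χ ∈ supportedCochains (Fin n → ℝ) R₁ k)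
    (hcob : coboundary χ =ᶠ[smallLists _] telescope (fun a => slice (s a)) m Φ) :
    ∀ᶠ l in smallLists (Fin (n + 1) → ℝ), (∃ z ∈ l, R₂ ≤ ‖z‖) →
      telescope (fun a => clip (s a)) m Φ l + coboundary (cylinder R χ) l = 0 := by
  have hε : 0 < ε := (abs_nonneg _).trans_lt (hs.mesh 0)
  have htail := tendsto_map_smallLists (uniformContinuous_tail (n := n))
  filter_upwards [eventually_isSmall hε, eventually_isSmall (sub_pos.2 hR₂),
    htail.eventually hcob, eventually_forall_sublist (htail.eventually hχ.2.2)]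
    with l hlε hlR hlcob hlχ ⟨z, hz, hzR⟩
  have hclose (w) (hw : w ∈ l) :
      |z 0 - w 0| < R₂ - R₁ ∧ ‖Fin.tail z‖ - ‖Fin.tail w‖ < R₂ - R₁ := by
    have h := hlR z hz w hw
    rw [dist_eq_max_tail, max_lt_iff, dist_eq_norm] at h
    exact ⟨h.1, (norm_sub_norm_le ..).trans_lt (dist_eq_norm (Fin.tail z) _ ▸ h.2)⟩
  rw [norm_eq_max_tail, le_max_iff, le_abs] at hzR
  by_cases hright : R₂ ≤ z 0
  · have hall (w) (hw : w ∈ l) : w ∈ {z : Fin (n + 1) → ℝ | R ≤ z 0} :=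
      show R ≤ w 0 by linarith [(abs_lt.1 (hclose w hw).1).2]
    rw [hs.telescope_clip_of_forall_le hall, cylinder, coboundary_pullbackOn_of_forall_mem hall,
      hlcob, CharTwo.add_self_eq_zero]
  rw [hs.telescope_clip_eq_zero hlε hΦ hz (by grind), zero_add]
  refine coboundary_eq_zero fun l' hl' _ => pullbackOn_eq_zero fun hl'R => ?_
  rcases eq_or_ne l' [] with rfl | hne
  · exact hχ.2.1
  obtain ⟨w, hw⟩ := List.exists_mem_of_ne_nil l' hne
  have hclosew := hclose w (hl'.subset hw)
  refine hlχ l' hl' ⟨Fin.tail w, List.mem_map_of_mem hw, ?_⟩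
  have := (abs_lt.1 hclosew.1).1
  have : R ≤ w 0 := hl'R w hw
  rcases hzR with (h | h) | h <;> linarith

/- Pushing `Φ` out along the first coordinate leaves a cochain on a half cylinder, which is
corrected by `χ`. -/
theorem IsGrid.exists_eventuallyEq_coboundary (hs : IsGrid R ε m s)
    (hR : 0 < R) (hR₁ : R < R₁) (hR₂ : R₁ < R₂)
    (hΦ : Φ ∈ supportedCochains (Fin (n + 1) → ℝ) R (k + 2)) (hΦε : VanishesOutside R ε Φ)
    (hcobΦ : ∀ l, IsSmall ε l → coboundary Φ l = 0)
    (hχ : χ ∈ supportedCochains (Fin n → ℝ) R₁ k)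
    (hcobχ : coboundary χ =ᶠ[smallLists _] telescope (fun a => slice (s a)) m Φ) :
    ∃ Ψ ∈ supportedCochains (Fin (n + 1) → ℝ) R₂ (k + 1), coboundary Ψ =ᶠ[smallLists _] Φ := by
  refine ⟨telescope (fun a => clip (s a)) m Φ + coboundary (cylinder R χ),
    ⟨fun l hl => ?_, by simp,
      hs.eventually_telescope_clip_add_coboundary_cylinder_eq_zero hR hR₁ hR₂ hΦε hχ hcobχ⟩,
    ?_⟩
  · rw [Pi.add_apply, telescope_eq_zero fun a _ i hi => hΦ.1 _ ?_, cylinder,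
      coboundary_eq_zero fun l' _ hlen => pullbackOn_eq_zero fun _ => hχ.1 _ ?_, add_zero]
    · rw [List.length_map]
      omega
    · rw [length_prismList _ _ hi]
      omega
  · filter_upwards [eventually_isSmall ((abs_nonneg _).trans_lt (hs.mesh 0))] with l hl
    rw [map_add, coboundary_coboundary, add_zero,
      hs.coboundary_telescope_clip hl hΦ.2.1 hΦε hcobΦ]

end Poincare

theorem exists_smul_add_smul_eventuallyEq_coboundary {n : ℕ} {R R' : ℝ} (hR : 0 < R)
    (hRR' : R < R') {Φ₁ Φ₂ : ListCochain (Fin n → ℝ)}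
    (hΦ₁ : Φ₁ ∈ supportedCochains (Fin n → ℝ) R (n + 1))
    (hΦ₂ : Φ₂ ∈ supportedCochains (Fin n → ℝ) R (n + 1))
    (hcob₁ : coboundary Φ₁ =ᶠ[smallLists _] 0) (hcob₂ : coboundary Φ₂ =ᶠ[smallLists _] 0) :
    ∃ c d : ZMod 2, (c ≠ 0 ∨ d ≠ 0) ∧ ∃ Ψ ∈ supportedCochains (Fin n → ℝ) R' n,
      coboundary Ψ =ᶠ[smallLists _] c • Φ₁ + d • Φ₂ := by
  induction n generalizing R R' with
  | zero =>
    have hrel : ∀ a b : ZMod 2, ∃ c d : ZMod 2, (c ≠ 0 ∨ d ≠ 0) ∧ c * a + d * b = 0 := by decide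
    obtain ⟨c, d, hcd, h⟩ := hrel (Φ₁ [0]) (Φ₂ [0])
    refine ⟨c, d, hcd, 0, zero_mem _, .of_forall fun l => ?_⟩
    by_cases hl : l.length = 1
    · obtain ⟨x, rfl⟩ := List.length_eq_one_iff.1 hl
      simpa [Subsingleton.elim x 0] using h.symm
    · simp [hΦ₁.1 l hl, hΦ₂.1 l hl]
  | succ n ih =>
    obtain ⟨ε, hε, h⟩ := eventually_smallLists.1
      ((hΦ₁.2.2.and hΦ₂.2.2).and (hcob₁.and hcob₂))
    simp only [forall₂_and] at h
    obtain ⟨⟨hvan₁, hvan₂⟩, hcob₁, hcob₂⟩ := h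
    obtain ⟨m, s, hs⟩ := exists_isGrid hR hε
    have hcob {Φ : ListCochain (Fin (n + 1) → ℝ)} (hΦ₀ : Φ [] = 0) (hΦ : VanishesOutside R ε Φ)
        (hcob : ∀ l, IsSmall ε l → coboundary Φ l = (0 : ListCochain _) l) :
        coboundary (telescope (fun a => slice (s a)) m Φ) =ᶠ[smallLists _] 0 := by
      filter_upwards [eventually_isSmall hε] with l hl
      rw [hs.coboundary_telescope_slice hΦ₀ hΦ hl, hs.telescope_slice_congr hcob hl, map_zero]
    obtain ⟨c, d, hcd, χ, hχ, hcobχ⟩ := ih hR (left_lt_add_div_two.2 hRR')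
      (hs.telescope_slice_mem_supportedCochains hΦ₁ hvan₁)
      (hs.telescope_slice_mem_supportedCochains hΦ₂ hvan₂)
      (hcob hΦ₁.2.1 hvan₁ hcob₁) (hcob hΦ₂.2.1 hvan₂ hcob₂)
    refine ⟨c, d, hcd, hs.exists_eventuallyEq_coboundary hR (left_lt_add_div_two.2 hRR')
      (add_div_two_lt_right.2 hRR') (add_mem (Submodule.smul_mem _ c hΦ₁)
      (Submodule.smul_mem _ d hΦ₂)) (fun l hl hz => ?_) (fun l hl => ?_) hχ ?_⟩
    · simp [hvan₁ l hl hz, hvan₂ l hl hz]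
    · simp [hcob₁ l hl, hcob₂ l hl]
    · simpa using hcobχ

end ListCochain

/-! ### Invariance of dimension -/

/-- Quantitative injectivity: the inverse of a continuous injection of a compact set is uniformly
continuous. -/
theorem exists_forall_dist_le_imp_dist_lt [MetricSpace M] [MetricSpace M'] {K : Set M}
    (hK : IsCompact K) {f : M → M'} (hf : ContinuousOn f K) (hinj : InjOn f K) {η : ℝ}
    (hη : 0 < η) : ∃ δ > 0, ∀ x ∈ K, ∀ y ∈ K, dist (f x) (f y) ≤ δ → dist x y < η := by
  have hKη : IsCompact (K ×ˢ K ∩ {q : M × M | η ≤ dist q.1 q.2}) :=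
    (hK.prod hK).inter_right (isClosed_le continuous_const continuous_dist)
  have hdist : ContinuousOn (fun q : M × M => dist (f q.1) (f q.2)) (K ×ˢ K) :=
    continuous_dist.comp_continuousOn
      ((hf.comp continuousOn_fst fun _ => And.left).prodMk
        (hf.comp continuousOn_snd fun _ => And.right))
  obtain ⟨δ, hδ, hle⟩ := hKη.exists_forall_le' (hdist.mono inter_subset_left) (a := 0) <| by
    rintro ⟨x, y⟩ ⟨⟨hx, hy⟩, hxy⟩
    exact dist_pos.2 fun h => hη.not_ge (hxy.out.trans_eq (dist_eq_zero.2 (hinj hx hy h)))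
  refine ⟨δ / 2, half_pos hδ, fun x hx y hy h => lt_of_not_ge fun hxy => ?_⟩
  linarith [hle (x, y) ⟨⟨hx, hy⟩, hxy⟩]

section Coloring

theorem exists_zmod_forall_ne {i : ℕ} (m : Fin i → ℤ) :
    ∃ c : ZMod (i + 1), ∀ a, (m a : ZMod (i + 1)) ≠ c := by
  by_contra! h
  simpa [ZMod.card] using Fintype.card_le_of_surjective (fun a => (m a : ZMod (i + 1))) h

theorem ediv_le_ediv_of_not_dvd {m m' d : ℤ} (hd : 0 < d) (hm : ¬ d ∣ m) (h : m ≤ m' + 1) :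
    m / d ≤ m' / d := by
  by_contra! hlt
  have hmul : d * (m' / d + 1) ≤ d * (m / d) := mul_le_mul_of_nonneg_left hlt hd.le
  have hpos : 0 < m % d :=
    (Int.emod_nonneg m hd.ne').lt_of_ne' fun h => hm (Int.dvd_of_emod_eq_zero h)
  linarith [Int.mul_ediv_add_emod m d, Int.mul_ediv_add_emod m' d, Int.emod_lt_of_pos m' hd]

theorem abs_sub_lt_of_ediv_eq {m m' d : ℤ} (hd : 0 < d) (h : m / d = m' / d) : |m - m'| < d := by
  have hm := Int.mul_ediv_add_emod m d
  rw [h] at hm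
  rw [abs_lt]
  constructor <;> linarith [Int.mul_ediv_add_emod m' d, Int.emod_nonneg m hd.ne',
    Int.emod_lt_of_pos m hd, Int.emod_nonneg m' hd.ne', Int.emod_lt_of_pos m' hd]

/- The colour of `z` is a residue avoided by all `⌊z a⌋`, so that `z` is not
on the boundary of a cube of that colour. -/
theorem exists_coloring_of_dist_lt_one (i : ℕ) : ∃ (color : (Fin i → ℝ) → ZMod (i + 1))
    (cell : (Fin i → ℝ) → Fin i → ℤ),
    (∀ z w, color z = color w → cell z = cell w → dist z w ≤ i + 1) ∧
      ∀ z w, dist z w < 1 → color z = color w → cell z = cell w := by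
  choose color hcolor using fun z : Fin i → ℝ => exists_zmod_forall_ne fun a => ⌊z a⌋
  have hi : (0 : ℤ) < i + 1 := by positivity
  refine ⟨color, fun z a => (⌊z a⌋ - (color z).val) / (i + 1 : ℤ), fun z w hc h => ?_,
    fun z w h hc => funext fun a => ?_⟩
  · refine (dist_pi_le_iff (by positivity)).2 fun a => ?_
    have hlt := abs_sub_lt_of_ediv_eq hi (congrFun h a)
    rw [hc, sub_sub_sub_cancel_right, abs_lt] at hlt
    have hfloor : (⌊z a⌋ : ℝ) - ⌊w a⌋ ≤ i ∧ (⌊w a⌋ : ℝ) - ⌊z a⌋ ≤ i := by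
      constructor <;> norm_cast <;> omega
    rw [Real.dist_eq, abs_le]
    constructor <;> linarith [Int.floor_le (z a), Int.lt_floor_add_one (z a), Int.floor_le (w a),
      Int.lt_floor_add_one (w a)]
  · have hle (z w : Fin i → ℝ) (h : dist z w < 1) (hc : color z = color w) :
        (⌊z a⌋ - (color z).val) / (i + 1 : ℤ) ≤ (⌊w a⌋ - (color w).val) / (i + 1 : ℤ) := by
      refine ediv_le_ediv_of_not_dvd hi (fun hdvd => hcolor z a ?_) ?_
      · have := (ZMod.intCast_zmod_eq_zero_iff_dvd (⌊z a⌋ - (color z).val) (i + 1)).2 (by simpa)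
        simpa [sub_eq_zero] using this
      · have hfloor : ⌊z a⌋ < ⌊w a⌋ + 2 := by
          have := (abs_lt.1 ((dist_le_pi_dist z w a).trans_lt h)).2
          refine Int.floor_lt.2 ?_
          push_cast
          linarith [Int.lt_floor_add_one (w a)]
        rw [hc]
        omega
    exact (hle z w h hc).antisymm (hle w z (dist_comm z w ▸ h) hc.symm)

theorem exists_coloring (i : ℕ) {δ : ℝ} (hδ : 0 < δ) : ∃ μ > 0,
    ∃ (color : (Fin i → ℝ) → ZMod (i + 1)) (cell : (Fin i → ℝ) → Fin i → ℤ),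
    (∀ z w, color z = color w → cell z = cell w → dist z w ≤ δ) ∧
      ∀ z w, dist z w < μ → color z = color w → cell z = cell w := by
  obtain ⟨color, cell, hsmall, hsep⟩ := exists_coloring_of_dist_lt_one i
  have hscale : 0 < (i + 1) / δ := by positivity
  have hdist (z w : Fin i → ℝ) :
      dist (((i + 1) / δ) • z) (((i + 1) / δ) • w) = (i + 1) / δ * dist z w := by
    rw [dist_smul₀, Real.norm_of_nonneg hscale.le]
  refine ⟨δ / (i + 1), by positivity, fun z => color (((i + 1) / δ) • z),
    fun z => cell (((i + 1) / δ) • z), fun z w hc h => ?_, fun z w h => hsep _ _ ?_⟩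
  · have := hsmall _ _ hc h
    rw [hdist, div_mul_eq_mul_div, div_le_iff₀ hδ] at this
    exact le_of_mul_le_mul_left this (by positivity)
  · rw [hdist, ← lt_div_iff₀' hscale, one_div_div]
    exact h

/-- A continuous injection of a compact set into `ℝⁱ` makes it possible to collapse small pieces of
the compact set to points in such a way that any small list has at most `i + 1` points left. -/
theorem exists_collapse [MetricSpace M] [Nonempty M] {K : Set M} (hK : IsCompact K) {i : ℕ}
    {f : M → Fin i → ℝ} (hf : ContinuousOn f K) (hinj : InjOn f K) {η : ℝ} (hη : 0 < η) :
    ∃ r : M → M, (∀ x, dist (r x) x < η) ∧ (∀ x ∉ K, r x = x) ∧ ∃ color : M → ZMod (i + 1),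
      ∃ ε > 0, ∀ x ∈ K, ∀ y ∈ K, dist x y < ε → color x = color y → r x = r y := by
  obtain ⟨δ, hδ, hinv⟩ := exists_forall_dist_le_imp_dist_lt hK hf hinj hη
  obtain ⟨μ, hμ, color, cell, hsmall, hsep⟩ := exists_coloring i hδ
  obtain ⟨ε, hε, hfε⟩ :=
    Metric.uniformContinuousOn_iff.1 (hK.uniformContinuousOn_of_continuous hf) μ hμ
  let piece (x : M) : ZMod (i + 1) × (Fin i → ℤ) := (color (f x), cell (f x))
  classical
  let r (x : M) : M := if x ∈ K then Function.invFunOn piece K (piece x) else x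
  refine ⟨r, fun x => ?_, fun x hx => if_neg hx, color ∘ f, ε, hε, fun x hx y hy hxy hc => ?_⟩
  · by_cases hx : x ∈ K
    · have hex : ∃ y ∈ K, piece y = piece x := ⟨x, hx, rfl⟩
      obtain ⟨hc, h⟩ := Prod.ext_iff.1 (Function.invFunOn_eq hex)
      simp only [r, if_pos hx]
      exact hinv _ (Function.invFunOn_mem hex) _ hx (hsmall _ _ hc h)
    · simpa only [r, if_neg hx, dist_self] using hη
  · have hpiece : piece x = piece y := Prod.ext hc (hsep _ _ (hfε x hx y hy hxy) hc)
    simp only [r, if_pos hx, if_pos hy, hpiece]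

end Coloring

namespace ListCochain

theorem coboundary_prism_of_coboundary_eq_zero {Φ : ListCochain M'} (h : coboundary Φ = 0)
    (r s : M → M') (l : List M) :
    coboundary (prism r s Φ) l = Φ (l.map r) + Φ (l.map s) := by
  rw [← coboundary_prism_add_prism_coboundary, h, map_zero, Pi.zero_apply, add_zero]

theorem IsSmall.prismList_id [PseudoMetricSpace M] {r : M → M} {ε η : ℝ} {l : List M}
    (hl : IsSmall ε l) (hr : ∀ z, dist (r z) z < η) (i : ℕ) :
    IsSmall (ε + 2 * η) (ListCochain.prismList id r l i) := by
  refine hl.prismList (fun x _ y _ hxy => ?_) i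
  have hη : 0 < η := dist_nonneg.trans_lt (hr x)
  have hxr : dist x (r y) < ε + η :=
    (dist_triangle_right _ _ y).trans_lt (add_lt_add hxy (hr y))
  have hrr : dist (r x) (r y) < η + (ε + η) :=
    (dist_triangle _ x _).trans_lt (add_lt_add (hr x) hxr)
  exact ⟨hxy.trans_le (by linarith), hxr.trans_le (by linarith), hrr.trans_le (by linarith)⟩

theorem IsSmall.map_of_dist_lt [PseudoMetricSpace M] {r : M → M} {η : ℝ} {l : List M}
    (hl : IsSmall η l) (hr : ∀ z, dist (r z) z < η) : IsSmall (3 * η) (l.map r) :=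
  hl.map fun x _ y _ hxy => by
    linarith [dist_triangle4 (r x) x y (r y), hr x, dist_comm y (r y), hr y]

variable {n : ℕ} {p : Fin n → ℝ} {r : (Fin n → ℝ) → (Fin n → ℝ)} {R : ℝ}

theorem dist_lt_of_sperner_prismList_id_ne_zero (hr : ∀ z, dist (r z) z < R)
    {l : List (Fin n → ℝ)} (hl : IsSmall R l) {i : ℕ} (hne : sperner p (prismList id r l i) ≠ 0)
    {z : Fin n → ℝ} (hz : z ∈ l) : dist z p < 4 * R := by
  have hlt {w : Fin n → ℝ} := dist_lt_of_sperner_ne_zero (x := w) (hl.prismList_id hr i) hne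
  rcases mem_prismList_or hz id r i with h | h
  · exact (hlt h).trans (by linarith [dist_nonneg.trans_lt (hr z)])
  · linarith [hlt h, hr z, dist_triangle_left z p (r z)]

theorem not_eventually_sperner_map_eq_zero (hr : ∀ z, dist (r z) z < R) :
    ¬ ∀ᶠ l in smallLists _, sperner p (l.map r) = 0 := by
  intro h
  refine coboundary_not_eventuallyEq_sperner (R := ‖p‖ + 4 * R) p (Ψ := prism id r (sperner p))
    ⟨fun l hl => prism_eq_zero fun i hi => ?_, by simp, ?_⟩ ?_
  · by_contra hne
    have := length_eq_of_sperner_ne_zero hne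
    rw [length_prismList _ _ hi] at this
    omega
  · filter_upwards [eventually_isSmall (dist_nonneg.trans_lt (hr p))] with l hl ⟨z, hz, hzR⟩
    refine prism_eq_zero fun i _ => by_contra fun hne => ?_
    have hzp := dist_lt_of_sperner_prismList_id_ne_zero hr hl hne hz
    rw [dist_eq_norm] at hzp
    linarith [norm_sub_norm_le z p]
  · filter_upwards [h] with l hl
    rw [coboundary_prism_of_coboundary_eq_zero (coboundary_sperner p), hl, List.map_id, add_zero]

end ListCochain

/- Otherwise collapsing the pieces would move no point far, and yet no small list would keep enough
points for the Sperner cocycle to be nonzero on it. -/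
open ListCochain in
theorem le_of_continuousOn_of_injOn_closedBall {j i : ℕ} {f : (Fin j → ℝ) → (Fin i → ℝ)} {δ : ℝ}
    (hδ : 0 < δ) (hf : ContinuousOn f (Metric.closedBall 0 δ))
    (hinj : InjOn f (Metric.closedBall 0 δ)) : j ≤ i := by
  have hδ' : 0 < δ / 4 := by positivity
  obtain ⟨r, hr, hr_id, color, ε, hε, hcolor⟩ :=
    exists_collapse (isCompact_closedBall _ _) hf hinj hδ'
  by_contra! hij
  refine not_eventually_sperner_map_eq_zero (p := 0) hr ?_
  filter_upwards [eventually_isSmall hε, eventually_isSmall hδ'] with l hlε hlδ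
  by_contra hne
  have hK (z) (hz : z ∈ l) : z ∈ Metric.closedBall (0 : Fin j → ℝ) δ := by
    by_contra hzK
    have hrl : IsSmall δ (l.map r) := (hlδ.map_of_dist_lt hr).mono (by linarith)
    have := dist_lt_of_sperner_ne_zero hrl hne (List.mem_map_of_mem hz)
    rw [hr_id z hzK] at this
    exact hzK this.le
  have hnodup := nodup_of_sperner_ne_zero hne
  have hnodup_color : (l.map color).Nodup :=
    hnodup.of_map.map_on fun x hx y hy hxy => List.inj_on_of_nodup_map hnodup hx hy
      (hcolor x (hK x hx) y (hK y hy) (hlε x hx y hy) hxy)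
  have hlen := hnodup_color.length_le_card
  rw [List.length_map, ← l.length_map (f := r), length_eq_of_sperner_ne_zero hne, ZMod.card] at hlen
  omega

namespace ListCochain

/-! ### Separation by closed subsets of a ball -/

section Separation

variable {n : ℕ} {R R' : ℝ} {p q : Fin n → ℝ} {A F : Set (Fin n → ℝ)}
  {Ψ : ListCochain (Fin n → ℝ)}

theorem eventually_forall_mem_of_sperner_ne_zero (hA : A ∈ 𝓝 p) :
    ∀ᶠ l in smallLists _, sperner p l ≠ 0 → ∀ z ∈ l, z ∈ A := by
  obtain ⟨ε, hε, hball⟩ := Metric.mem_nhds_iff.1 hA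
  exact (eventually_isSmall hε).mono fun _ hl h _ hz => hball (dist_lt_of_sperner_ne_zero hl h hz)

theorem exists_mem_of_sperner_ne_zero {l : List (Fin n → ℝ)} (h : sperner p l ≠ 0) : ∃ z, z ∈ l :=
  (exists_mem_firstNeg_eq h 0).imp fun _ => And.left

theorem sperner_mem_supportedCochains (hp : ‖p‖ < R) :
    sperner p ∈ supportedCochains (Fin n → ℝ) R (n + 1) := by
  refine ⟨fun l hl => not_not.1 (mt length_eq_of_sperner_ne_zero hl),
    not_not.1 fun h => by simpa using length_eq_of_sperner_ne_zero h, ?_⟩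
  have hball : {z | ‖z‖ < R} ∈ 𝓝 p := (isOpen_lt continuous_norm continuous_const).mem_nhds hp
  filter_upwards [eventually_forall_mem_of_sperner_ne_zero hball] with l hl ⟨z, hz, hzR⟩
  exact not_not.1 fun hne => hzR.not_gt (hl hne z hz)

/-- If `Ψ` vanishes on the facets of the small simplices that meet both `A` and its complement, the
part of `Ψ` inside `A` has coboundary `sperner p`. -/
theorem compl_notMem_nhds_of_eventually_eq_zero (hΨ : Ψ ∈ supportedCochains (Fin n → ℝ) R n)
    (hcob : coboundary Ψ =ᶠ[smallLists _] sperner p + sperner q) (hp : A ∈ 𝓝 p)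
    (hcut : ∀ᶠ l in smallLists _, (∃ z ∈ l, z ∈ A) → (∃ z ∈ l, z ∉ A) →
      ∀ l' : List (Fin n → ℝ), l'.Sublist l → Ψ l' = 0) : Aᶜ ∉ 𝓝 q := by
  intro hq
  have hΞ {l} (h : Ψ l = 0) : pullbackOn A id Ψ l = 0 := pullbackOn_eq_zero fun _ => by simpa
  refine coboundary_not_eventuallyEq_sperner p (R := R) ⟨fun l hl => hΞ (hΨ.1 l hl),
    hΞ hΨ.2.1, hΨ.2.2.mono fun l h hz => hΞ (h hz)⟩ ?_
  filter_upwards [hcob, hcut, eventually_forall_mem_of_sperner_ne_zero hp,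
    eventually_forall_mem_of_sperner_ne_zero hq] with l hcobl hcutl hpl hql
  by_cases hin : ∀ z ∈ l, z ∈ A
  · have hq0 : sperner q l = 0 := by
      by_contra hne
      obtain ⟨z, hz⟩ := exists_mem_of_sperner_ne_zero hne
      exact hql hne z hz (hin z hz)
    rw [coboundary_pullbackOn_of_forall_mem hin, List.map_id, hcobl, Pi.add_apply, hq0, add_zero]
  · have hp0 : sperner p l = 0 := not_not.1 (mt hpl hin)
    rw [hp0]
    refine coboundary_eq_zero fun l' hl' _ => pullbackOn_eq_zero fun hl'A => ?_
    rw [List.map_id]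
    rcases l' with - | ⟨z, l'⟩
    · exact hΨ.2.1
    · push Not at hin
      exact hcutl ⟨z, hl'.subset List.mem_cons_self, hl'A z List.mem_cons_self⟩ hin _ hl'

theorem exists_dist_lt_and_forall_thickening_mem [PseudoMetricSpace M] (F : Set M) {η : ℝ}
    (hη : 0 < η) :
    ∃ r : M → M, (∀ z, dist (r z) z < η) ∧ ∀ z ∈ Metric.thickening η F, r z ∈ F := by
  have h (z : M) : ∃ y, dist y z < η ∧ (z ∈ Metric.thickening η F → y ∈ F) := by
    by_cases hz : z ∈ Metric.thickening η F
    · obtain ⟨y, hy, hzy⟩ := Metric.mem_thickening_iff.1 hz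
      exact ⟨y, dist_comm z y ▸ hzy, fun _ => hy⟩
    · exact ⟨z, by rwa [dist_self], fun h => absurd h hz⟩
  choose r hr using h
  exact ⟨r, fun z => (hr z).1, fun z => (hr z).2⟩

theorem add_coboundary_prism_id (r : M → M) (Φ : ListCochain M) (l : List M) :
    Φ l + coboundary (prism id r Φ) l = Φ (l.map r) + prism id r (coboundary Φ) l := by
  have h := coboundary_prism_add_prism_coboundary id r Φ l
  rw [List.map_id] at h
  linear_combination (exp := 1) h + CharTwo.add_self_eq_zero (Φ l)
    - CharTwo.add_self_eq_zero (prism id r (coboundary Φ) l)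

theorem dist_lt_or_dist_lt_of_prism_id_ne_zero {r : (Fin n → ℝ) → (Fin n → ℝ)} {η : ℝ}
    (hr : ∀ z, dist (r z) z < η)
    (hcob : ∀ l, IsSmall (3 * η) l → coboundary Ψ l = sperner p l + sperner q l)
    {l : List (Fin n → ℝ)} (hl : IsSmall η l) (hne : prism id r (coboundary Ψ) l ≠ 0)
    {z : Fin n → ℝ} (hz : z ∈ l) : dist z p < 4 * η ∨ dist z q < 4 * η := by
  contrapose! hne
  refine prism_eq_zero fun i _ => ?_
  have hp : sperner p (prismList id r l i) = 0 :=
    not_not.1 fun h => hne.1.not_gt (dist_lt_of_sperner_prismList_id_ne_zero hr hl h hz)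
  have hq : sperner q (prismList id r l i) = 0 :=
    not_not.1 fun h => hne.2.not_gt (dist_lt_of_sperner_prismList_id_ne_zero hr hl h hz)
  rw [hcob _ ((hl.prismList_id hr i).mono (by linarith)), hp, hq, add_zero]

theorem add_coboundary_prism_id_mem_supportedCochains {r : (Fin n → ℝ) → (Fin n → ℝ)} {η : ℝ}
    (hr : ∀ z, dist (r z) z < η) (hΨ : Ψ ∈ supportedCochains (Fin n → ℝ) R n)
    (hΨR : VanishesOutside R (3 * η) Ψ)
    (hcob : ∀ l, IsSmall (3 * η) l → coboundary Ψ l = sperner p l + sperner q l)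
    (hp : ‖p‖ < R) (hq : ‖q‖ < R) (hR : R + 4 * η ≤ R') :
    Ψ + coboundary (prism id r Ψ) ∈ supportedCochains (Fin n → ℝ) R' n := by
  have hη : 0 < η := dist_nonneg.trans_lt (hr p)
  refine ⟨fun l hl => ?_, by simp [hΨ.2.1], ?_⟩
  · have hl' (i) (hi : i < l.length) : coboundary Ψ (prismList id r l i) = 0 :=
      coboundary_eq_zero fun l' _ hlen => hΨ.1 _ (by rw [length_prismList _ _ hi] at hlen; omega)
    rw [Pi.add_apply, add_coboundary_prism_id, hΨ.1 _ (by simpa), prism_eq_zero hl', add_zero]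
  · filter_upwards [eventually_isSmall hη] with l hl ⟨z, hz, hzR⟩
    have hprism : prism id r (coboundary Ψ) l = 0 := by
      by_contra hne
      rcases dist_lt_or_dist_lt_of_prism_id_ne_zero hr hcob hl hne hz with h | h
      all_goals
        rw [dist_eq_norm] at h
        linarith [norm_sub_norm_le z p, norm_sub_norm_le z q]
    have hrz : ‖z‖ - ‖r z‖ ≤ dist (r z) z := by
      rw [dist_comm, dist_eq_norm]
      exact norm_sub_norm_le ..
    rw [Pi.add_apply, add_coboundary_prism_id, hprism,
      hΨR _ (hl.map_of_dist_lt hr) ⟨r z, List.mem_map_of_mem hz, by linarith [hr z]⟩, add_zero]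

/-- A cochain vanishing on the small simplices with vertices in `F` is cohomologous to one vanishing
on the small simplices near `F`: push a neighbourhood of `F` into `F`. -/
theorem exists_eventually_thickening_eq_zero (hΨ : Ψ ∈ supportedCochains (Fin n → ℝ) R n)
    (hcob : coboundary Ψ =ᶠ[smallLists _] sperner p + sperner q) (hF : IsClosed F)
    (hΨF : ∀ᶠ l in smallLists _, (∀ z ∈ l, z ∈ F) → Ψ l = 0) (hpF : p ∉ F) (hqF : q ∉ F)
    (hp : ‖p‖ < R) (hq : ‖q‖ < R) (hR : R < R') :
    ∃ Ψ' ∈ supportedCochains (Fin n → ℝ) R' n,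
      coboundary Ψ' =ᶠ[smallLists _] sperner p + sperner q ∧
      ∃ η > 0, ∀ᶠ l in smallLists _, (∀ z ∈ l, z ∈ Metric.thickening η F) → Ψ' l = 0 := by
  obtain ⟨ε, hε, hsmall⟩ := eventually_smallLists.1 (hcob.and (hΨ.2.2.and hΨF))
  simp only [forall₂_and] at hsmall
  obtain ⟨δp, hδp, hFp⟩ := Metric.isOpen_iff.1 hF.isOpen_compl p hpF
  obtain ⟨δq, hδq, hFq⟩ := Metric.isOpen_iff.1 hF.isOpen_compl q hqF
  have hlt {c : ℝ} (hc : 0 < c) : ∀ᶠ η in 𝓝[>] (0 : ℝ), 5 * η < c :=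
    ((continuous_const_mul (5 : ℝ)).tendsto' 0 0 (mul_zero _)).eventually_lt_const hc
      |>.filter_mono nhdsWithin_le_nhds
  obtain ⟨η, hηR, hηε, hηp, hηq, hη⟩ := ((hlt (sub_pos.2 hR)).and <| (hlt hε).and <|
    (hlt hδp).and <| (hlt hδq).and self_mem_nhdsWithin).exists
  replace hη : 0 < η := hη
  obtain ⟨hcob', hΨR, hΨF'⟩ := hsmall
  have hmono {l : List (Fin n → ℝ)} (hl : IsSmall (3 * η) l) : IsSmall ε l := hl.mono (by linarith)
  obtain ⟨r, hr, hrF⟩ := exists_dist_lt_and_forall_thickening_mem F hη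
  refine ⟨Ψ + coboundary (prism id r Ψ), add_coboundary_prism_id_mem_supportedCochains hr hΨ
    (fun l hl => hΨR l (hmono hl)) (fun l hl => hcob' l (hmono hl)) hp hq (by linarith),
    ?_, η, hη, ?_⟩
  · rwa [map_add, coboundary_coboundary, add_zero]
  filter_upwards [eventually_isSmall hη] with l hl hlF
  rcases eq_or_ne l [] with rfl | hne
  · simp [hΨ.2.1]
  obtain ⟨z, hz⟩ := List.exists_mem_of_ne_nil l hne
  have hprism : prism id r (coboundary Ψ) l = 0 := by
    by_contra hne
    obtain ⟨y, hy, hzy⟩ := Metric.mem_thickening_iff.1 (hlF z hz)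
    rcases dist_lt_or_dist_lt_of_prism_id_ne_zero hr (fun l hl => hcob' l (hmono hl)) hl hne hz
      with h | h
    · exact hFp (Metric.mem_ball.2 (by linarith [dist_triangle_left y p z])) hy
    · exact hFq (Metric.mem_ball.2 (by linarith [dist_triangle_left y q z])) hy
  rw [Pi.add_apply, add_coboundary_prism_id, hprism, hΨF' _ (hmono (hl.map_of_dist_lt hr))
    (by simpa using fun z hz => hrF z (hlF z hz)), add_zero]

theorem exists_mem_segment_mem_frontier {E : Type*} [NormedAddCommGroup E] [NormedSpace ℝ E]
    {A : Set E} {a b : E} (ha : a ∈ A) (hb : b ∉ A) : ∃ w ∈ segment ℝ a b, w ∈ frontier A := by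
  by_contra! h
  have hsub : segment ℝ a b ⊆ interior A ∪ (closure A)ᶜ := fun w hw => by
    by_cases hwA : w ∈ interior A
    · exact .inl hwA
    · exact .inr fun hcl => h w hw ⟨hcl, hwA⟩
  have hpre : IsPreconnected (segment ℝ a b) := (convex_segment a b).isPreconnected
  obtain ⟨w, -, hint, hext⟩ := hpre _ _ isOpen_interior isClosed_closure.isOpen_compl hsub
    ⟨a, left_mem_segment ℝ a b, (hsub (left_mem_segment ℝ a b)).resolve_right
      fun h => h (subset_closure ha)⟩
    ⟨b, right_mem_segment ℝ a b, (hsub (right_mem_segment ℝ a b)).resolve_left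
      fun h => hb (interior_subset h)⟩
  exact hext (interior_subset_closure hint)

theorem mem_of_forall_mem_frontier (hΨ : Ψ ∈ supportedCochains (Fin n → ℝ) R n)
    (hcob : coboundary Ψ =ᶠ[smallLists _] sperner p + sperner q) (hF : IsClosed F)
    (hΨF : ∀ᶠ l in smallLists _, (∀ z ∈ l, z ∈ F) → Ψ l = 0) (hpF : p ∉ F) (hqF : q ∉ F)
    (hp : ‖p‖ < R) (hq : ‖q‖ < R) (hR : R < R') (hAF : ∀ w ∈ frontier A, ‖w‖ < R' → w ∈ F)
    (hpA : p ∈ A) : q ∈ A := by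
  by_contra hqA
  obtain ⟨Ψ', hΨ', hcob', η, hη, hΨ'F⟩ := exists_eventually_thickening_eq_zero hΨ hcob hF hΨF
    hpF hqF hp hq (left_lt_add_div_two.2 hR)
  have hpA' : A ∈ 𝓝 p := by
    rw [← mem_interior_iff_mem_nhds, ← self_sdiff_frontier]
    exact ⟨hpA, fun h => hpF (hAF p h (hp.trans hR))⟩
  have hqA' : Aᶜ ∈ 𝓝 q := by
    rw [← mem_interior_iff_mem_nhds, ← self_sdiff_frontier, frontier_compl]
    exact ⟨hqA, fun h => hqF (hAF q h (hq.trans hR))⟩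
  refine compl_notMem_nhds_of_eventually_eq_zero hΨ' hcob' hpA' ?_ hqA'
  have hR' : 0 < R' - (R + R') / 2 := by linarith
  filter_upwards [eventually_isSmall hη, eventually_isSmall hR',
    eventually_forall_sublist hΨ'F, eventually_forall_sublist hΨ'.2.2]
    with l hlη hlR hlF hlΨ ⟨a, ha, haA⟩ ⟨b, hb, hbA⟩ l' hl'
  rcases eq_or_ne l' [] with rfl | hne
  · exact hΨ'.2.1
  obtain ⟨w, hw, hwA⟩ := exists_mem_segment_mem_frontier haA hbA
  have hdist {ε} (hl : IsSmall ε l) (z) (hz : z ∈ l) : dist w z < ε :=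
    (convex_ball z ε).segment_subset (hl a ha z hz) (hl b hb z hz) hw
  by_cases hwR : ‖w‖ < R'
  · refine hlF l' hl' fun z hz => Metric.mem_thickening_iff.2 ⟨w, hAF w hwA hwR, ?_⟩
    exact dist_comm w z ▸ hdist hlη z (hl'.subset hz)
  · obtain ⟨z, hz⟩ := List.exists_mem_of_ne_nil l' hne
    refine hlΨ l' hl' ⟨z, hz, ?_⟩
    have := hdist hlR z (hl'.subset hz)
    rw [dist_eq_norm] at this
    linarith [norm_sub_norm_le w z]

theorem zmodTwo_cases : ∀ c d : ZMod 2, (c ≠ 0 ∨ d ≠ 0) →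
    (c = 1 ∧ d = 1) ∨ (c = 1 ∧ d = 0) ∨ (c = 0 ∧ d = 1) := by decide

theorem exists_coboundary_eventuallyEq_sperner_add_sperner (hp : ‖p‖ < R) (hq : ‖q‖ < R) :
    ∃ Ψ ∈ supportedCochains (Fin n → ℝ) R n,
      coboundary Ψ =ᶠ[smallLists _] sperner p + sperner q := by
  obtain ⟨R₁, hR₁, hR₁R⟩ := exists_between (max_lt hp hq)
  obtain ⟨hpR₁, hqR₁⟩ := max_lt_iff.1 hR₁
  have hcob (p : Fin n → ℝ) : coboundary (sperner p) =ᶠ[smallLists _] 0 :=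
    .of_eq (coboundary_sperner p)
  obtain ⟨c, d, hcd, Ψ, hΨ, hΨcob⟩ := exists_smul_add_smul_eventuallyEq_coboundary
    ((norm_nonneg p).trans_lt hpR₁) hR₁R (sperner_mem_supportedCochains hpR₁)
    (sperner_mem_supportedCochains hqR₁) (hcob p) (hcob q)
  obtain ⟨rfl, rfl⟩ | ⟨rfl, rfl⟩ | ⟨rfl, rfl⟩ := zmodTwo_cases c d hcd
  · exact ⟨Ψ, hΨ, by simpa using hΨcob⟩
  · exact absurd (by simpa using hΨcob) (coboundary_not_eventuallyEq_sperner p hΨ)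
  · exact absurd (by simpa using hΨcob) (coboundary_not_eventuallyEq_sperner q hΨ)

end Separation

end ListCochain

theorem uniformContinuousOn_invFunOn_image [MetricSpace M] [Nonempty M] [MetricSpace M'] {K : Set M}
    (hK : IsCompact K) {f : M → M'} (hf : ContinuousOn f K) (hinj : InjOn f K) :
    UniformContinuousOn (Function.invFunOn f K) (f '' K) := by
  refine Metric.uniformContinuousOn_iff.2 fun η hη => ?_
  obtain ⟨δ, hδ, h⟩ := exists_forall_dist_le_imp_dist_lt hK hf hinj hη
  refine ⟨δ, hδ, fun x hx y hy hxy =>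
    h _ (Function.invFunOn_mem hx) _ (Function.invFunOn_mem hy) ?_⟩
  rw [Function.invFunOn_eq hx, Function.invFunOn_eq hy]
  exact hxy.le

theorem interior_image_eq_empty_of_lt {i j : ℕ} (hij : i < j) {K : Set (Fin i → ℝ)}
    (hK : IsCompact K) {g : (Fin i → ℝ) → (Fin j → ℝ)} (hg : ContinuousOn g K) (hinj : InjOn g K) :
    interior (g '' K) = ∅ := by
  refine eq_empty_of_forall_notMem fun y hy => hij.not_ge ?_
  obtain ⟨δ, hδ, hball⟩ := Metric.nhds_basis_closedBall.mem_iff.1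
    (mem_interior_iff_mem_nhds.1 hy)
  have hmaps : MapsTo (y + ·) (Metric.closedBall 0 δ) (g '' K) := fun z hz =>
    hball (by simpa [dist_eq_norm] using hz)
  exact le_of_continuousOn_of_injOn_closedBall (f := Function.invFunOn g K ∘ (y + ·)) hδ
    ((uniformContinuousOn_invFunOn_image hK hg hinj).continuousOn.comp
      (continuous_const_add y).continuousOn hmaps)
    ((Function.invFunOn_injOn_image g K).comp (add_right_injective y).injOn hmaps)

theorem notMem_of_mem_frontier_connectedComponentIn [TopologicalSpace M]
    [LocallyConnectedSpace M] {U : Set M} (hU : IsOpen U) {x w : M}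
    (hw : w ∈ frontier (connectedComponentIn U x)) : w ∉ U := by
  intro hwU
  obtain ⟨v, hv, hv'⟩ := mem_closure_iff.1 hw.1 _ hU.connectedComponentIn
    (mem_connectedComponentIn hwU)
  refine hw.2 (hU.connectedComponentIn.interior_eq.symm ▸ ?_)
  rw [connectedComponentIn_eq hv', ← connectedComponentIn_eq hv]
  exact mem_connectedComponentIn hwU

namespace ListCochain

/-! ### Local separation by an embedded disc -/

section PullbackOn

variable {E F : Type*} [NormedAddCommGroup E] [NormedAddCommGroup F] {K : Set E} {g : E → F}
  {R R' : ℝ} {k : ℕ}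

theorem coboundary_mem_supportedCochains {Φ : ListCochain E} (hΦ : Φ ∈ supportedCochains E R k)
    (hR : R < R') : coboundary Φ ∈ supportedCochains E R' (k + 1) := by
  refine ⟨fun l hl => coboundary_eq_zero fun l' _ hlen => hΦ.1 _ (by omega), coboundary_nil Φ, ?_⟩
  filter_upwards [eventually_isSmall (sub_pos.2 hR), eventually_forall_sublist hΦ.2.2]
    with l hl hlΦ ⟨z, hz, hzR⟩
  refine coboundary_eq_zero fun l' hl' _ => ?_
  rcases eq_or_ne l' [] with rfl | hne
  · exact hΦ.2.1
  obtain ⟨w, hw⟩ := List.exists_mem_of_ne_nil l' hne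
  have hzw := hl z hz w (hl'.subset hw)
  rw [dist_eq_norm] at hzw
  exact hlΦ l' hl' ⟨w, hw, by linarith [norm_sub_norm_le z w]⟩

theorem pullbackOn_mem_supportedCochains (hg : UniformContinuousOn g K) {Φ : ListCochain F}
    (hΦ : Φ ∈ supportedCochains F R k) (hR : ∀ z ∈ K, R' ≤ ‖z‖ → R ≤ ‖g z‖) :
    pullbackOn K g Φ ∈ supportedCochains E R' k := by
  refine ⟨fun l hl => pullbackOn_eq_zero fun _ => hΦ.1 _ (by simpa),
    pullbackOn_eq_zero fun _ => hΦ.2.1, ?_⟩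
  filter_upwards [eventually_smallLists_map hg hΦ.2.2] with l hl ⟨z, hz, hzR⟩
  exact pullbackOn_eq_zero fun hK =>
    hl hK ⟨g z, List.mem_map_of_mem hz, hR z (hK z hz) hzR⟩

end PullbackOn

section EmbeddedDisc

variable {k m : ℕ} {g : (Fin k → ℝ) → (Fin (m + 1) → ℝ)} {K : Set (Fin k → ℝ)}
  {R R' ρ : ℝ} {p q : Fin (m + 1) → ℝ} {Ψ : ListCochain (Fin (m + 1) → ℝ)}
  {χ : ListCochain (Fin k → ℝ)}

/-- If the restriction of `Ψ` to `F ⊆ g '' K` is a coboundary, then `F` does not separate `p`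
from `q`: extend a primitive by zero and subtract its coboundary from `Ψ`. -/
theorem mem_of_coboundary_eq_of_forall_mem_frontier (hK : IsCompact K) (hg : ContinuousOn g K)
    (hinj : InjOn g K) (hgR : ∀ z ∈ K, ‖z‖ < ρ → ‖g z‖ < R) (hR : R < R')
    (hΨ : Ψ ∈ supportedCochains (Fin (m + 1) → ℝ) R (m + 1))
    (hcob : coboundary Ψ =ᶠ[smallLists _] sperner p + sperner q)
    (hχ : χ ∈ supportedCochains (Fin k → ℝ) ρ m) {A F : Set (Fin (m + 1) → ℝ)} (hF : IsClosed F)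
    (hFK : F ⊆ g '' K)
    (hχF : ∀ᶠ l in smallLists _, (∀ z ∈ l, z ∈ K ∧ g z ∈ F) → coboundary χ l = Ψ (l.map g))
    (hpF : p ∉ F) (hqF : q ∉ F) (hp : ‖p‖ < R) (hq : ‖q‖ < R)
    (hAF : ∀ w ∈ frontier A, ‖w‖ < R' → w ∈ F) (hpA : p ∈ A) : q ∈ A := by
  obtain ⟨R'', hRR'', hR''⟩ := exists_between hR
  have hinv := uniformContinuousOn_invFunOn_image hK hg hinj
  have hχ' : pullbackOn (g '' K) (Function.invFunOn g K) χ ∈ supportedCochains _ R m := by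
    refine pullbackOn_mem_supportedCochains hinv hχ fun w hw hwR => ?_
    contrapose! hwR
    simpa [Function.invFunOn_eq hw] using hgR _ (Function.invFunOn_mem hw) hwR
  refine mem_of_forall_mem_frontier (add_mem (supportedCochains_mono hRR''.le hΨ)
    (coboundary_mem_supportedCochains hχ' hRR'')) ?_ hF ?_ hpF hqF (hp.trans hRR'')
    (hq.trans hRR'') hR'' hAF hpA
  · rwa [map_add, coboundary_coboundary, add_zero]
  filter_upwards [eventually_smallLists_map hinv hχF] with l hl hlF
  have hlK (z) (hz : z ∈ l) : z ∈ g '' K := hFK (hlF z hz)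
  have hmap : (l.map (Function.invFunOn g K)).map g = l := by
    rw [List.map_map]
    exact (List.map_congr_left fun w hw => Function.invFunOn_eq (hlK w hw)).trans (List.map_id l)
  rw [Pi.add_apply, coboundary_pullbackOn_of_forall_mem hlK, hl hlK, hmap, CharTwo.add_self_eq_zero]
  simp only [List.forall_mem_map]
  exact fun z hz => ⟨Function.invFunOn_mem (hlK z hz),
    (Function.invFunOn_eq (hlK z hz)).symm ▸ hlF z hz⟩

theorem coboundary_pullbackOn_closedBall_eventuallyEq_zero {δ δ' : ℝ}
    (hg : ContinuousOn g (Metric.closedBall 0 δ)) (hδ : δ' < δ)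
    (hgR : ∀ z, δ' ≤ ‖z‖ → ‖z‖ ≤ δ → R ≤ ‖g z‖)
    (hΨ : Ψ ∈ supportedCochains (Fin (m + 1) → ℝ) R (m + 1))
    (hcob : coboundary Ψ =ᶠ[smallLists _] sperner p + sperner q)
    (hp : p ∉ g '' Metric.closedBall 0 δ) (hq : q ∉ g '' Metric.closedBall 0 δ) :
    coboundary (pullbackOn (Metric.closedBall 0 δ) g Ψ) =ᶠ[smallLists _] 0 := by
  have hK := isCompact_closedBall (0 : Fin k → ℝ) δ
  have hg' := hK.uniformContinuousOn_of_continuous hg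
  have hD := (hK.image_of_continuousOn hg).isClosed.isOpen_compl
  have hsupp := pullbackOn_mem_supportedCochains hg' hΨ
    fun z hz hzδ => hgR z hzδ (mem_closedBall_zero_iff.1 hz)
  have hsperner {p} (hp : p ∉ g '' Metric.closedBall 0 δ) : ∀ᶠ l in smallLists _,
      (∀ z ∈ l, z ∈ g '' Metric.closedBall 0 δ) → sperner p l = 0 := by
    filter_upwards [eventually_forall_mem_of_sperner_ne_zero (hD.mem_nhds hp)] with l hl hlD
    by_contra hne
    obtain ⟨z, hz⟩ := exists_mem_of_sperner_ne_zero hne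
    exact hl hne z hz (hlD z hz)
  filter_upwards [eventually_smallLists_map hg' (hcob.and ((hsperner hp).and (hsperner hq))),
    eventually_forall_sublist hsupp.2.2, eventually_isSmall (sub_pos.2 hδ)] with l hlD hlsupp hl
  by_cases hall : ∀ z ∈ l, z ∈ Metric.closedBall 0 δ
  · obtain ⟨hlcob, hlp, hlq⟩ := hlD hall
    have hlg : ∀ w ∈ l.map g, w ∈ g '' Metric.closedBall 0 δ :=
      List.forall_mem_map.2 fun z hz => mem_image_of_mem g (hall z hz)
    rw [coboundary_pullbackOn_of_forall_mem hall, hlcob, Pi.add_apply, hlp hlg, hlq hlg]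
    rfl
  push Not at hall
  obtain ⟨z, hz, hzδ⟩ := hall
  rw [mem_closedBall_zero_iff, not_le] at hzδ
  refine coboundary_eq_zero fun l' hl' _ => ?_
  rcases eq_or_ne l' [] with rfl | hne
  · exact hsupp.2.1
  obtain ⟨w, hw⟩ := List.exists_mem_of_ne_nil l' hne
  have hzw := hl z hz w (hl'.subset hw)
  rw [dist_eq_norm] at hzw
  exact hlsupp l' hl' ⟨w, hw, by linarith [norm_sub_norm_le z w]⟩

end EmbeddedDisc

/-- A topological embedding `g` of the closed ball of radius `δ`, with the bounds needed to compare
supports: `r` bounds `‖g z‖` from below for `δ₁ ≤ ‖z‖`, and `R` from above for `‖z‖ < δ₂`. -/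
structure IsEmbeddedDisc {i j : ℕ} (g : (Fin i → ℝ) → (Fin j → ℝ)) (δ δ₁ δ₂ r R : ℝ) : Prop where
  continuousOn : ContinuousOn g (Metric.closedBall 0 δ)
  injOn : InjOn g (Metric.closedBall 0 δ)
  pos : 0 < δ₁
  lt : δ₁ < δ₂
  le : δ₂ ≤ δ
  le_norm : ∀ z, δ₁ ≤ ‖z‖ → ‖z‖ ≤ δ → r ≤ ‖g z‖
  norm_lt : ∀ z, ‖z‖ < δ₂ → ‖g z‖ < R
  rle : r ≤ R

theorem exists_isEmbeddedDisc {i j : ℕ} {g : (Fin i → ℝ) → (Fin j → ℝ)} {δ R : ℝ} (hδ : 0 < δ)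
    (hg : ContinuousOn g (Metric.closedBall 0 δ)) (hinj : InjOn g (Metric.closedBall 0 δ))
    (h0 : g 0 = 0) (hR : 0 < R) : ∃ δ₁ δ₂ r, 0 < r ∧ IsEmbeddedDisc g δ δ₁ δ₂ r R := by
  have hmem : (0 : Fin i → ℝ) ∈ Metric.closedBall 0 δ := Metric.mem_closedBall_self hδ.le
  obtain ⟨δ', hδ', hclose⟩ := Metric.continuousOn_iff.1 hg 0 hmem R hR
  have hpos : 0 < min δ δ' := lt_min hδ hδ'
  obtain ⟨r, hr, hinv⟩ := exists_forall_dist_le_imp_dist_lt (isCompact_closedBall _ _) hg hinj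
    (half_pos hpos)
  simp only [h0, dist_zero_right] at hclose
  refine ⟨min δ δ' / 2, min δ δ', min r R, lt_min hr hR, hg, hinj, half_pos hpos,
    half_lt_self hpos, min_le_left _ _, fun z hz hzδ => ?_, fun z hz => ?_, min_le_right _ _⟩
  · contrapose! hz
    simpa using hinv z (by simpa) 0 hmem (by simpa [h0] using (hz.trans_le (min_le_left _ _)).le)
  · exact hclose z (by simpa using (hz.trans_le (min_le_left _ _)).le)
      (hz.trans_le (min_le_right _ _))

namespace IsEmbeddedDisc

variable {k : ℕ} {g : (Fin k → ℝ) → (Fin (k + 1) → ℝ)} {δ δ₁ δ₂ r R R' : ℝ}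
  {p q s y : Fin (k + 1) → ℝ}

theorem mem_ball_diff (h : IsEmbeddedDisc g δ δ₁ δ₂ r R) (hR : R < R') (hp : ‖p‖ < r)
    (hpD : p ∉ g '' Metric.closedBall 0 δ) :
    p ∈ Metric.ball 0 R' \ g '' Metric.closedBall 0 δ :=
  ⟨mem_ball_zero_iff.2 (hp.trans (h.rle.trans_lt hR)), hpD⟩

theorem isClosed_image (h : IsEmbeddedDisc g δ δ₁ δ₂ r R) :
    IsClosed (g '' Metric.closedBall 0 δ) :=
  ((isCompact_closedBall 0 δ).image_of_continuousOn h.continuousOn).isClosed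

theorem mem_of_mem_frontier_connectedComponentIn (h : IsEmbeddedDisc g δ δ₁ δ₂ r R)
    (hy : y ∈ frontier (connectedComponentIn (Metric.ball 0 R' \ g '' Metric.closedBall 0 δ) p))
    (hyR : ‖y‖ < R') : y ∈ g '' Metric.closedBall 0 δ := by
  by_contra hyD
  exact notMem_of_mem_frontier_connectedComponentIn (Metric.isOpen_ball.sdiff h.isClosed_image) hy
    ⟨mem_ball_zero_iff.2 hyR, hyD⟩

theorem coboundary_pullbackOn_eventuallyEq_zero (h : IsEmbeddedDisc g δ δ₁ δ₂ r R)
    {Ψ : ListCochain (Fin (k + 1) → ℝ)}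
    (hΨ : Ψ ∈ supportedCochains (Fin (k + 1) → ℝ) r (k + 1))
    (hcob : coboundary Ψ =ᶠ[smallLists _] sperner p + sperner q)
    (hp : p ∉ g '' Metric.closedBall 0 δ) (hq : q ∉ g '' Metric.closedBall 0 δ) :
    coboundary (pullbackOn (Metric.closedBall 0 δ) g Ψ) =ᶠ[smallLists _] 0 :=
  coboundary_pullbackOn_closedBall_eventuallyEq_zero h.continuousOn (h.lt.trans_le h.le) h.le_norm
    hΨ hcob hp hq

theorem pullbackOn_mem_supportedCochains (h : IsEmbeddedDisc g δ δ₁ δ₂ r R)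
    {Ψ : ListCochain (Fin (k + 1) → ℝ)}
    (hΨ : Ψ ∈ supportedCochains (Fin (k + 1) → ℝ) r (k + 1)) :
    pullbackOn (Metric.closedBall 0 δ) g Ψ ∈ supportedCochains (Fin k → ℝ) δ₁ (k + 1) :=
  ListCochain.pullbackOn_mem_supportedCochains
    ((isCompact_closedBall 0 δ).uniformContinuousOn_of_continuous h.continuousOn) hΨ
    fun z hz hzδ => h.le_norm z hzδ (mem_closedBall_zero_iff.1 hz)

theorem mem_connectedComponentIn_of_coboundary_eventuallyEq (h : IsEmbeddedDisc g δ δ₁ δ₂ r R)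
    (hR : R < R') {Ψ : ListCochain (Fin (k + 1) → ℝ)} {χ : ListCochain (Fin k → ℝ)}
    (hΨ : Ψ ∈ supportedCochains (Fin (k + 1) → ℝ) r (k + 1))
    (hcob : coboundary Ψ =ᶠ[smallLists _] sperner p + sperner q)
    (hχ : χ ∈ supportedCochains (Fin k → ℝ) δ₂ k)
    (hχΨ : coboundary χ =ᶠ[smallLists _] pullbackOn (Metric.closedBall 0 δ) g Ψ)
    (hpD : p ∉ g '' Metric.closedBall 0 δ) (hqD : q ∉ g '' Metric.closedBall 0 δ)
    (hp : ‖p‖ < r) (hq : ‖q‖ < r) :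
    q ∈ connectedComponentIn (Metric.ball 0 R' \ g '' Metric.closedBall 0 δ) p :=
  mem_of_coboundary_eq_of_forall_mem_frontier (isCompact_closedBall 0 δ) h.continuousOn h.injOn
    (fun z _ => h.norm_lt z) hR (supportedCochains_mono h.rle hΨ) hcob hχ h.isClosed_image
    subset_rfl
    (hχΨ.mono fun _ hl hlD => hl.trans (pullbackOn_of_forall_mem (fun z hz => (hlD z hz).1) g Ψ))
    hpD hqD (hp.trans_le h.rle) (hq.trans_le h.rle)
    (fun _ => h.mem_of_mem_frontier_connectedComponentIn)
    (mem_connectedComponentIn (h.mem_ball_diff hR hp hpD))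

/-- The cocycles on the disc defined by the pairs `p, q` and `p, s` are linearly dependent in
cohomology, so one of `p, q`, of `p, s`, or of `q, s` is not separated by the disc. -/
theorem mem_connectedComponentIn_or_or (h : IsEmbeddedDisc g δ δ₁ δ₂ r R) (hR : R < R')
    (hpD : p ∉ g '' Metric.closedBall 0 δ) (hqD : q ∉ g '' Metric.closedBall 0 δ)
    (hsD : s ∉ g '' Metric.closedBall 0 δ) (hp : ‖p‖ < r) (hq : ‖q‖ < r) (hs : ‖s‖ < r) :
    q ∈ connectedComponentIn (Metric.ball 0 R' \ g '' Metric.closedBall 0 δ) p ∨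
      s ∈ connectedComponentIn (Metric.ball 0 R' \ g '' Metric.closedBall 0 δ) p ∨
      s ∈ connectedComponentIn (Metric.ball 0 R' \ g '' Metric.closedBall 0 δ) q := by
  obtain ⟨Ψ₁, hΨ₁, hcob₁⟩ := exists_coboundary_eventuallyEq_sperner_add_sperner hp hq
  obtain ⟨Ψ₂, hΨ₂, hcob₂⟩ := exists_coboundary_eventuallyEq_sperner_add_sperner hp hs
  obtain ⟨c, d, hcd, χ, hχ, hχcob⟩ := exists_smul_add_smul_eventuallyEq_coboundary h.pos h.lt
    (h.pullbackOn_mem_supportedCochains hΨ₁) (h.pullbackOn_mem_supportedCochains hΨ₂)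
    (h.coboundary_pullbackOn_eventuallyEq_zero hΨ₁ hcob₁ hpD hqD)
    (h.coboundary_pullbackOn_eventuallyEq_zero hΨ₂ hcob₂ hpD hsD)
  obtain ⟨rfl, rfl⟩ | ⟨rfl, rfl⟩ | ⟨rfl, rfl⟩ := zmodTwo_cases c d hcd
  · rw [one_smul, one_smul, ← pullbackOn_add] at hχcob
    refine .inr (.inr (h.mem_connectedComponentIn_of_coboundary_eventuallyEq hR
      (add_mem hΨ₁ hΨ₂) ?_ hχ hχcob hqD hsD hq hs))
    filter_upwards [hcob₁, hcob₂] with l hl₁ hl₂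
    simp only [map_add, Pi.add_apply, hl₁, hl₂]
    linear_combination CharTwo.add_self_eq_zero (sperner p l)
  · rw [one_smul, zero_smul, add_zero] at hχcob
    exact .inl (h.mem_connectedComponentIn_of_coboundary_eventuallyEq hR hΨ₁ hcob₁ hχ hχcob hpD hqD
      hp hq)
  · rw [one_smul, zero_smul, zero_add] at hχcob
    exact .inr (.inl (h.mem_connectedComponentIn_of_coboundary_eventuallyEq hR hΨ₂ hcob₂ hχ hχcob
      hpD hsD hp hs))

/-- The Sperner cocycle of a point of the disc generates the compactly supported cohomology of the
disc, so the cocycle of the pair `p, q` becomes a coboundary away from that point. -/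
theorem exists_coboundary_eventuallyEq_pullbackOn_add_sperner (h : IsEmbeddedDisc g δ δ₁ δ₂ r R)
    {Ψ : ListCochain (Fin (k + 1) → ℝ)}
    (hΨ : Ψ ∈ supportedCochains (Fin (k + 1) → ℝ) r (k + 1))
    (hcob : coboundary Ψ =ᶠ[smallLists _] sperner p + sperner q)
    (hpD : p ∉ g '' Metric.closedBall 0 δ) (hqD : q ∉ g '' Metric.closedBall 0 δ)
    {e : Fin k → ℝ} (he : ‖e‖ < δ₁) :
    ∃ χ ∈ supportedCochains (Fin k → ℝ) δ₂ k, ∃ d : ZMod 2,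
      coboundary χ =ᶠ[smallLists _] pullbackOn (Metric.closedBall 0 δ) g Ψ + d • sperner e := by
  obtain ⟨c, d, hcd, χ, hχ, hχcob⟩ := exists_smul_add_smul_eventuallyEq_coboundary h.pos h.lt
    (h.pullbackOn_mem_supportedCochains hΨ) (sperner_mem_supportedCochains he)
    (h.coboundary_pullbackOn_eventuallyEq_zero hΨ hcob hpD hqD) (.of_eq (coboundary_sperner e))
  refine ⟨χ, hχ, d, ?_⟩
  obtain ⟨rfl, rfl⟩ | ⟨rfl, rfl⟩ | ⟨rfl, rfl⟩ := zmodTwo_cases c d hcd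
  · rwa [one_smul] at hχcob
  · rwa [one_smul] at hχcob
  · exact absurd (by simpa using hχcob) (coboundary_not_eventuallyEq_sperner e hχ)

theorem mem_closure_connectedComponentIn (h : IsEmbeddedDisc g δ δ₁ δ₂ r R) (hR : R < R')
    (hpD : p ∉ g '' Metric.closedBall 0 δ) (hyD : y ∈ g '' Metric.closedBall 0 δ)
    (hp : ‖p‖ < r) (hy : ‖y‖ < r) :
    y ∈ closure (connectedComponentIn (Metric.ball 0 R' \ g '' Metric.closedBall 0 δ) p) := by
  set A := connectedComponentIn (Metric.ball 0 R' \ g '' Metric.closedBall 0 δ) p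
  by_contra hyA
  have hyA' : {z | ‖z‖ < r} ∩ (closure A)ᶜ ∈ 𝓝 y :=
    inter_mem ((isOpen_lt continuous_norm continuous_const).mem_nhds hy)
      (isClosed_closure.isOpen_compl.mem_nhds hyA)
  have hyD' : g '' Metric.closedBall 0 δ ∉ 𝓝 y := fun hyD' => by
    simpa [interior_image_eq_empty_of_lt k.lt_succ_self (isCompact_closedBall 0 δ) h.continuousOn
      h.injOn] using mem_interior_iff_mem_nhds.2 hyD'
  obtain ⟨q, ⟨hq, hqA⟩, hqD⟩ := not_subset.1 fun hsub => hyD' (mem_of_superset hyA' hsub)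
  obtain ⟨e, he, rfl⟩ := hyD
  have heδ : ‖e‖ < δ₁ := by
    by_contra! hle
    exact hy.not_ge (h.le_norm e hle (mem_closedBall_zero_iff.1 he))
  obtain ⟨Ψ, hΨ, hcob⟩ := exists_coboundary_eventuallyEq_sperner_add_sperner hp hq
  obtain ⟨χ, hχ, d, hχcob⟩ := h.exists_coboundary_eventuallyEq_pullbackOn_add_sperner hΨ hcob
    hpD hqD heδ
  have heA : ∀ᶠ z in 𝓝 e, g z ∉ closure A :=
    (h.continuousOn.continuousAt (mem_of_superset
      (Metric.isOpen_ball.mem_nhds (mem_ball_zero_iff.2 (heδ.trans (h.lt.trans_le h.le))))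
      Metric.ball_subset_closedBall)).eventually (isClosed_closure.isOpen_compl.mem_nhds hyA)
  refine hqA (subset_closure ?_)
  refine mem_of_coboundary_eq_of_forall_mem_frontier (isCompact_closedBall 0 δ) h.continuousOn
    h.injOn (fun z _ => h.norm_lt z) hR (supportedCochains_mono h.rle hΨ) hcob hχ
    (F := g '' Metric.closedBall 0 δ ∩ closure A) (h.isClosed_image.inter isClosed_closure)
    inter_subset_left ?_ (fun hpF => hpD hpF.1) (fun hqF => hqD hqF.1) (hp.trans_le h.rle)
    (hq.trans_le h.rle)
    (fun w hw hwR => ⟨h.mem_of_mem_frontier_connectedComponentIn hw hwR, hw.1⟩)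
    (mem_connectedComponentIn (h.mem_ball_diff hR hp hpD))
  filter_upwards [hχcob, eventually_forall_mem_of_sperner_ne_zero heA] with l hl hle hlF
  have hsperner : sperner e l = 0 := by
    by_contra hne
    obtain ⟨z, hz⟩ := exists_mem_of_sperner_ne_zero hne
    exact hle hne z hz (hlF z hz).2.2
  rw [hl, Pi.add_apply, Pi.smul_apply, hsperner, smul_zero, add_zero,
    pullbackOn_of_forall_mem fun z hz => (hlF z hz).1]

end IsEmbeddedDisc

end ListCochain

/-- `W` looks near `x` like a two-sided wall: arbitrarily close to `x` its complement meets at most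
two local components, and every one of them accumulates at all nearby points of `W`. -/
def HasTwoSidesAt [TopologicalSpace M] (W : Set M) (x : M) : Prop :=
  ∀ U ∈ 𝓝 x, ∃ V ∈ 𝓝 x,
    (∀ p ∈ V \ W, ∀ q ∈ V \ W, ∀ s ∈ V \ W, q ∈ connectedComponentIn (U \ W) p ∨
      s ∈ connectedComponentIn (U \ W) p ∨ s ∈ connectedComponentIn (U \ W) q) ∧
    ∀ p ∈ V \ W, V ∩ W ⊆ closure (connectedComponentIn (U \ W) p)

theorem hasTwoSidesAt_image_closedBall {k : ℕ} {g : (Fin k → ℝ) → (Fin (k + 1) → ℝ)} {δ : ℝ}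
    (hδ : 0 < δ) (hg : ContinuousOn g (Metric.closedBall 0 δ))
    (hinj : InjOn g (Metric.closedBall 0 δ)) (h0 : g 0 = 0) :
    HasTwoSidesAt (g '' Metric.closedBall 0 δ) 0 := by
  intro U hU
  obtain ⟨R', hR', hball⟩ := Metric.mem_nhds_iff.1 hU
  obtain ⟨δ₁, δ₂, r, hr, h⟩ :=
    ListCochain.exists_isEmbeddedDisc hδ hg hinj h0 (half_pos hR')
  have hsub (p) := connectedComponentIn_mono p
    (sdiff_subset_sdiff_left (t := g '' Metric.closedBall 0 δ) hball)
  refine ⟨Metric.ball 0 r, Metric.ball_mem_nhds 0 hr, ?_, ?_⟩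
  · simp only [Set.mem_sdiff, mem_ball_zero_iff]
    rintro p ⟨hp, hpD⟩ q ⟨hq, hqD⟩ s ⟨hs, hsD⟩
    exact (h.mem_connectedComponentIn_or_or (half_lt_self hR') hpD hqD hsD hp hq hs).imp
      (@hsub p _) (.imp (@hsub p _) (@hsub q _))
  · simp only [Set.mem_sdiff, mem_ball_zero_iff]
    rintro p ⟨hp, hpD⟩ y ⟨hy, hyD⟩
    exact closure_mono (hsub p) (h.mem_closure_connectedComponentIn (half_lt_self hR') hpD hyD hp
      (mem_ball_zero_iff.1 hy))

/-! ### Submanifolds -/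

theorem image_connectedComponentIn_diff_subset [TopologicalSpace M] [TopologicalSpace M']
    {f : M' → M} {U' W' : Set M'} {U W : Set M} (hf : ContinuousOn f U')
    (hmaps : MapsTo f (U' \ W') (U \ W)) {p : M'} (hp : p ∈ U' \ W') :
    f '' connectedComponentIn (U' \ W') p ⊆ connectedComponentIn (U \ W) (f p) :=
  ((hf.mono sdiff_subset).image_connectedComponentIn_subset hp).trans
    (connectedComponentIn_mono _ hmaps.image_subset)

theorem HasTwoSidesAt.of_openPartialHomeomorph [TopologicalSpace M] [TopologicalSpace M']
    (e : OpenPartialHomeomorph M M') {x : M} (hx : x ∈ e.source) {W : Set M} {W' : Set M'}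
    (h : HasTwoSidesAt W' (e x)) (hW : ∀ᶠ y in 𝓝 x, y ∈ W ↔ e y ∈ W') : HasTwoSidesAt W x := by
  intro U hU
  have hN : {y | (y ∈ W ↔ e y ∈ W') ∧ y ∈ e.source ∧ y ∈ U} ∈ 𝓝 x :=
    inter_mem hW (inter_mem (e.open_source.mem_nhds hx) hU)
  set N := {y | (y ∈ W ↔ e y ∈ W') ∧ y ∈ e.source ∧ y ∈ U}
  set U' := e.target ∩ e.symm ⁻¹' N
  have hU' : U' ∈ 𝓝 (e x) := inter_mem (e.open_target.mem_nhds (e.map_source hx))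
    ((e.tendsto_symm hx).eventually hN)
  obtain ⟨V', hV', hcomp, hcl⟩ := h U' hU'
  have hcont : ContinuousOn e.symm U' := e.continuousOn_symm.mono inter_subset_left
  have hmaps : MapsTo e.symm (U' \ W') (U \ W) := fun z ⟨⟨hz, hzN⟩, hzW⟩ =>
    ⟨hzN.2.2, fun h => hzW (e.right_inv hz ▸ hzN.1.1 h)⟩
  have hmem {y} (hy : y ∈ N) (hyW : y ∉ W) : e y ∈ U' \ W' :=
    ⟨⟨e.map_source hy.2.1, by rwa [mem_preimage, e.left_inv hy.2.1]⟩, fun h => hyW (hy.1.2 h)⟩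
  have himage {p} (hp : p ∈ N) (hpW : p ∉ W) :
      e.symm '' connectedComponentIn (U' \ W') (e p) ⊆ connectedComponentIn (U \ W) p := by
    simpa only [e.left_inv hp.2.1] using
      image_connectedComponentIn_diff_subset hcont hmaps (hmem hp hpW)
  have hpull {p q} (hp : p ∈ N) (hpW : p ∉ W) (hq : q ∈ N)
      (h : e q ∈ connectedComponentIn (U' \ W') (e p)) : q ∈ connectedComponentIn (U \ W) p :=
    himage hp hpW ⟨e q, h, e.left_inv hq.2.1⟩
  refine ⟨N ∩ e ⁻¹' V', inter_mem hN (e.continuousAt hx hV'), ?_, ?_⟩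
  · rintro p ⟨⟨hp, hpV⟩, hpW⟩ q ⟨⟨hq, hqV⟩, hqW⟩ s ⟨⟨hs, hsV⟩, hsW⟩
    exact (hcomp _ ⟨hpV, (hmem hp hpW).2⟩ _ ⟨hqV, (hmem hq hqW).2⟩ _ ⟨hsV, (hmem hs hsW).2⟩).imp
      (hpull hp hpW hq) (.imp (hpull hp hpW hs) (hpull hq hqW hs))
  · rintro p ⟨⟨hp, hpV⟩, hpW⟩ y ⟨⟨hy, hyV⟩, hyW⟩
    have hmem_closure := (e.continuousAt_symm (e.map_source hy.2.1)).continuousWithinAt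
      |>.mem_closure_image (hcl _ ⟨hpV, (hmem hp hpW).2⟩ ⟨hyV, hy.1.1 hyW⟩)
    rw [e.left_inv hy.2.1] at hmem_closure
    exact closure_mono (himage hp hpW) hmem_closure

section Charts

variable {i j : ℕ} [TopologicalSpace M] [TopologicalSpace M']

theorem exists_openPartialHomeomorph_eq_zero [ChartedSpace (EuclideanSpace ℝ (Fin i)) M] (x : M) :
    ∃ e : OpenPartialHomeomorph M (Fin i → ℝ), x ∈ e.source ∧ e x = 0 := by
  let c := chartAt (EuclideanSpace ℝ (Fin i)) x
  let E := EuclideanSpace.equiv (Fin i) ℝ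
  exact ⟨c.transHomeomorph (E.toHomeomorph.trans (Homeomorph.addRight (-E (c x)))),
    mem_chart_source _ x, by simp [c]⟩

theorem exists_continuousOn_injOn_closedBall {f : M → M'} (hf : Continuous f)
    (hinj : Function.Injective f) {e : OpenPartialHomeomorph M (Fin j → ℝ)} {x : M}
    (hx : x ∈ e.source) (hex : e x = 0) (e' : OpenPartialHomeomorph M' (Fin i → ℝ))
    (hx' : f x ∈ e'.source) :
    ∃ δ > 0, MapsTo (f ∘ e.symm) (Metric.closedBall 0 δ) e'.source ∧
      ContinuousOn (e' ∘ f ∘ e.symm) (Metric.closedBall 0 δ) ∧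
      InjOn (e' ∘ f ∘ e.symm) (Metric.closedBall 0 δ) := by
  have hnhds : e.target ∩ (f ∘ e.symm) ⁻¹' e'.source ∈ 𝓝 0 := by
    rw [← hex]
    refine inter_mem (e.open_target.mem_nhds (e.map_source hx))
      ((hf.continuousAt.tendsto.comp (e.tendsto_symm hx)) (e'.open_source.mem_nhds hx'))
  obtain ⟨δ, hδ, hball⟩ := Metric.nhds_basis_closedBall.mem_iff.1 hnhds
  have hmaps : MapsTo (f ∘ e.symm) (Metric.closedBall 0 δ) e'.source := fun z hz => (hball hz).2
  have htarget : Metric.closedBall 0 δ ⊆ e.target := fun z hz => (hball hz).1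
  exact ⟨δ, hδ, hmaps,
    e'.continuousOn.comp (hf.comp_continuousOn (e.continuousOn_symm.mono htarget)) hmaps,
    e'.injOn.comp (hinj.comp_injOn (e.symm.injOn.mono htarget)) hmaps⟩

theorem le_of_continuous_injective [ChartedSpace (EuclideanSpace ℝ (Fin j)) M]
    [ChartedSpace (EuclideanSpace ℝ (Fin i)) M'] [Nonempty M] {f : M → M'} (hf : Continuous f)
    (hinj : Function.Injective f) : j ≤ i := by
  obtain ⟨x⟩ := ‹Nonempty M›
  obtain ⟨e, hx, hex⟩ := exists_openPartialHomeomorph_eq_zero (i := j) x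
  obtain ⟨e', hx', -⟩ := exists_openPartialHomeomorph_eq_zero (i := i) (f x)
  obtain ⟨δ, hδ, -, hcont, hinjOn⟩ := exists_continuousOn_injOn_closedBall hf hinj hx hex e' hx'
  exact le_of_continuousOn_of_injOn_closedBall hδ hcont hinjOn

theorem hasTwoSidesAt_range [ChartedSpace (EuclideanSpace ℝ (Fin i)) M]
    [ChartedSpace (EuclideanSpace ℝ (Fin (i + 1))) M'] {f : M → M'}
    (hf : Topology.IsEmbedding f) (x : M) : HasTwoSidesAt (range f) (f x) := by
  obtain ⟨e, hx, hex⟩ := exists_openPartialHomeomorph_eq_zero (i := i) x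
  obtain ⟨e', hx', hex'⟩ := exists_openPartialHomeomorph_eq_zero (i := i + 1) (f x)
  obtain ⟨δ, hδ, hmaps, hcont, hinjOn⟩ :=
    exists_continuousOn_injOn_closedBall hf.continuous hf.injective hx hex e' hx'
  have hsymm : e.symm 0 = x := by rw [← hex, e.left_inv hx]
  have h0 : (e' ∘ f ∘ e.symm) 0 = 0 := by
    rw [Function.comp_apply, Function.comp_apply, hsymm, hex']
  refine .of_openPartialHomeomorph e' hx'
    (hex' ▸ hasTwoSidesAt_image_closedBall hδ hcont hinjOn h0) ?_
  have hball : ∀ᶠ u in 𝓝 x, u ∈ e.source ∧ e u ∈ Metric.closedBall 0 δ :=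
    inter_mem (e.open_source.mem_nhds hx)
      (e.continuousAt hx (by rw [hex]; exact Metric.closedBall_mem_nhds 0 hδ))
  rw [hf.nhds_eq_comap, eventually_comap] at hball
  filter_upwards [hball, e'.open_source.mem_nhds hx'] with y hy hy'
  constructor
  · rintro ⟨u, rfl⟩
    obtain ⟨hu, huδ⟩ := hy u rfl
    exact ⟨e u, huδ, by rw [Function.comp_apply, Function.comp_apply, e.left_inv hu]⟩
  · rintro ⟨z, hz, hzy⟩
    exact ⟨e.symm z, e'.injOn (hmaps hz) hy' hzy⟩

end Charts

namespace IsSimanifold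

variable {N i j : ℕ} {S S' : Set (Euc N)}

theorem isPreconnected (hS : IsSimanifold i S) : IsPreconnected S := by
  have := hS.2.1
  exact isPreconnected_iff_preconnectedSpace.2 inferInstance

theorem le_of_inter_subset (hS : IsSimanifold j S) (hS' : IsSimanifold i S') {x : Euc N}
    (hx : x ∈ S) {V : Set (Euc N)} (hV : IsOpen V) (hxV : x ∈ V) (hsub : S ∩ V ⊆ S') : j ≤ i := by
  obtain ⟨-, -, ⟨_⟩⟩ := hS
  obtain ⟨-, -, ⟨_⟩⟩ := hS'
  let O : TopologicalSpace.Opens S := ⟨Subtype.val ⁻¹' V, hV.preimage continuous_subtype_val⟩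
  have : Nonempty O := ⟨⟨⟨x, hx⟩, hxV⟩⟩
  exact le_of_continuous_injective (f := fun y : O => (⟨y, hsub ⟨y.1.2, y.2⟩⟩ : S'))
    (by fun_prop) fun _ _ h => Subtype.ext (Subtype.ext (congrArg (fun z : S' => (z : Euc N)) h))

theorem sdim_eq (hS : IsSimanifold i S) : sdim S = i := by
  refine IsGreatest.csSup_eq ⟨⟨S, hS, subset_rfl⟩, ?_⟩
  rintro j ⟨T, hT, hTS⟩
  obtain ⟨x, hx⟩ := hT.1
  exact hT.le_of_inter_subset hS hx isOpen_univ (mem_univ x) (inter_subset_left.trans hTS)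

theorem hasTwoSidesAt (hS : IsSimanifold (i + 1) S) (hS' : IsSimanifold i S') (hsub : S' ⊆ S)
    {x : S} (hx : (x : Euc N) ∈ S') : HasTwoSidesAt (Subtype.val ⁻¹' S') x := by
  obtain ⟨-, -, ⟨_⟩⟩ := hS
  obtain ⟨-, -, ⟨_⟩⟩ := hS'
  rw [show Subtype.val ⁻¹' S' = range (inclusion hsub) from (range_inclusion hsub).symm]
  exact hasTwoSidesAt_range (i := i) (.inclusion hsub) ⟨x, hx⟩

end IsSimanifold

/-! ### Walls -/

/-- The set `W` is a locally two-sided wall whose complement is cut into the two nonempty open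
sides `U` and `V`. -/
structure IsWall [TopologicalSpace M] (W U V : Set M) : Prop where
  isOpen_left : IsOpen U
  isOpen_right : IsOpen V
  disjoint : Disjoint U V
  union_eq : U ∪ V = Wᶜ
  nonempty_left : U.Nonempty
  nonempty_right : V.Nonempty
  hasTwoSidesAt : ∀ x ∈ W, HasTwoSidesAt W x

namespace IsWall

variable [TopologicalSpace M] {W U V O A B : Set M}

theorem symm (h : IsWall W U V) : IsWall W V U :=
  ⟨h.isOpen_right, h.isOpen_left, h.disjoint.symm, union_comm V U ▸ h.union_eq, h.nonempty_right,
    h.nonempty_left, h.hasTwoSidesAt⟩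

theorem notMem_of_mem_left (h : IsWall W U V) {x : M} (hx : x ∈ U) : x ∉ W :=
  h.union_eq.subset (.inl hx)

theorem disjoint_closure_left (h : IsWall W U V) : Disjoint (closure U) V :=
  h.disjoint.closure_left h.isOpen_right

theorem connectedComponentIn_diff_subset_left (h : IsWall W U V) {p : M} (hpO : p ∈ O)
    (hp : p ∈ U) : connectedComponentIn (O \ W) p ⊆ U :=
  isPreconnected_connectedComponentIn.subset_left_of_subset_union h.isOpen_left h.isOpen_right
    h.disjoint
    ((connectedComponentIn_subset _ _).trans fun _ hy => h.union_eq.symm.subset hy.2)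
    ⟨p, mem_connectedComponentIn ⟨hpO, h.notMem_of_mem_left hp⟩, hp⟩

theorem isClopen_preimage_closure_left (h : IsWall W U V) :
    IsClopen (Subtype.val ⁻¹' closure U : Set W) := by
  refine ⟨isClosed_closure.preimage continuous_subtype_val, isOpen_iff_mem_nhds.2 fun x hx => ?_⟩
  obtain ⟨N, hN, -, hcl⟩ := h.hasTwoSidesAt x x.2 univ univ_mem
  obtain ⟨p, hpN, hpU⟩ := mem_closure_iff_nhds.1 hx N hN
  filter_upwards [continuous_subtype_val.continuousAt hN] with y hy
  exact closure_mono (h.connectedComponentIn_diff_subset_left (mem_univ p) hpU)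
    (hcl p ⟨hpN, h.notMem_of_mem_left hpU⟩ ⟨hy, y.2⟩)

theorem inter_closure_left_nonempty [PreconnectedSpace M] (h : IsWall W U V) :
    (W ∩ closure U).Nonempty := by
  by_contra! hempty
  have hclosed : closure U ⊆ U := fun x hx => by
    have hxW : x ∉ W := fun hxW => (hempty.subset ⟨hxW, hx⟩).elim
    exact (h.union_eq.symm.subset hxW).resolve_right (h.disjoint_closure_left.notMem_of_mem_left hx)
  obtain rfl | rfl := isClopen_iff.1 ⟨isClosed_of_closure_subset hclosed, h.isOpen_left⟩
  · exact h.nonempty_left.ne_empty rfl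
  · exact h.nonempty_right.ne_empty (univ_disjoint.1 h.disjoint)

theorem subset_closure_left [PreconnectedSpace M] (h : IsWall W U V) (hW : IsPreconnected W) :
    W ⊆ closure U := by
  have := isPreconnected_iff_preconnectedSpace.1 hW
  obtain ⟨x, hxW, hx⟩ := h.inter_closure_left_nonempty
  have := (isClopen_iff.1 h.isClopen_preimage_closure_left).resolve_left
    (nonempty_iff_ne_empty.1 ⟨⟨x, hxW⟩, hx⟩)
  exact fun y hy => this.symm.subset (mem_univ (⟨y, hy⟩ : W))

theorem inter_closure_nonempty_of_separation (h : IsWall W U V) (hO : IsPreconnected O)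
    (hA : IsOpen A) (hB : IsOpen B) (hAB : Disjoint A B) (hunion : A ∪ B = U ∩ O)
    (hA' : A.Nonempty) (hB' : B.Nonempty) : (W ∩ O ∩ closure A).Nonempty := by
  have hAU : A ⊆ U ∩ O := subset_union_left.trans hunion.subset
  have hBU : B ⊆ U ∩ O := subset_union_right.trans hunion.subset
  by_contra! hempty
  have hclosed : closure A ∩ O ⊆ A := by
    rintro x ⟨hx, hxO⟩
    have hxV : x ∉ V := h.disjoint_closure_left.notMem_of_mem_left
      (closure_mono (hAU.trans inter_subset_left) hx)
    have hxW : x ∉ W := fun hxW => (hempty.subset ⟨⟨hxW, hxO⟩, hx⟩).elim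
    have hxU : x ∈ U := (h.union_eq.symm.subset hxW).resolve_right hxV
    exact (hunion.symm.subset ⟨hxU, hxO⟩).resolve_right
      ((hAB.closure_left hB).notMem_of_mem_left hx)
  have hOA : O ⊆ A := hO.subset_of_closure_inter_subset hA
    (hA'.mono fun x hx => ⟨(hAU hx).2, hx⟩) hclosed
  obtain ⟨y, hy⟩ := hB'
  exact hAB.notMem_of_mem_left (hOA (hBU hy).2) hy

theorem not_disjoint_of_mem_closure (h : IsWall W U V) (hO : IsOpen O) (hA : IsOpen A)
    (hB : IsOpen B) (hunion : A ∪ B = U ∩ O) {x : M} (hx : x ∈ W ∩ O) (hxA : x ∈ closure A)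
    (hxB : x ∈ closure B) (hxV : x ∈ closure V) : ¬ Disjoint A B := by
  intro hAB
  obtain ⟨N, hN, hsides, -⟩ := h.hasTwoSidesAt x hx.1 O (hO.mem_nhds hx.2)
  obtain ⟨p, hpN, hp⟩ := mem_closure_iff_nhds.1 hxA N hN
  obtain ⟨q, hqN, hq⟩ := mem_closure_iff_nhds.1 hxB N hN
  obtain ⟨s, hsN, hs⟩ := mem_closure_iff_nhds.1 hxV N hN
  have hpU : p ∈ U ∩ O := hunion.subset (.inl hp)
  have hqU : q ∈ U ∩ O := hunion.subset (.inr hq)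
  have hcomp {r : M} (hr : r ∈ U ∩ O) : connectedComponentIn (O \ W) r ⊆ U :=
    h.connectedComponentIn_diff_subset_left hr.2 hr.1
  rcases hsides p ⟨hpN, h.notMem_of_mem_left hpU.1⟩ q ⟨hqN, h.notMem_of_mem_left hqU.1⟩
    s ⟨hsN, h.symm.notMem_of_mem_left hs⟩ with hpq | hps | hqs
  · have hsub : connectedComponentIn (O \ W) p ⊆ A ∪ B := fun y hy =>
      hunion.symm.subset ⟨hcomp hpU hy, (connectedComponentIn_subset _ _ hy).1⟩
    have hpp := mem_connectedComponentIn (F := O \ W) ⟨hpU.2, h.notMem_of_mem_left hpU.1⟩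
    exact hAB.notMem_of_mem_left (isPreconnected_connectedComponentIn.subset_left_of_subset_union
      hA hB hAB hsub ⟨p, hpp, hp⟩ hpq) hq
  · exact h.disjoint.notMem_of_mem_left (hcomp hpU hps) hs
  · exact h.disjoint.notMem_of_mem_left (hcomp hqU hqs) hs

/-- If `U ∩ O` were the disjoint union of open sets `A` and `B`, then the closures of `A` and `B`
would meet on the connected set `W ∩ O`, and `W` would have three sides at a common point. -/
theorem isPreconnected_inter_left [PreconnectedSpace M] (h : IsWall W U V)
    (hW : IsPreconnected W) (hO : IsOpen O) (hO' : IsPreconnected O)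
    (hWO : IsPreconnected (W ∩ O)) : IsPreconnected (U ∩ O) := by
  intro u v hu hv hcover hu' hv'
  by_contra! hempty
  have hA : IsOpen (U ∩ O ∩ u) := (h.isOpen_left.inter hO).inter hu
  have hB : IsOpen (U ∩ O ∩ v) := (h.isOpen_left.inter hO).inter hv
  have hAB : Disjoint (U ∩ O ∩ u) (U ∩ O ∩ v) := by
    rwa [disjoint_iff_inter_eq_empty, ← inter_inter_distrib_left]
  have hunion : U ∩ O ∩ u ∪ U ∩ O ∩ v = U ∩ O := by
    rw [← inter_union_distrib_left, inter_eq_left.2 hcover]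
  have hcl : W ∩ O ⊆ closure (U ∩ O ∩ u) ∪ closure (U ∩ O ∩ v) := by
    rw [← closure_union, hunion]
    exact fun x hx => hO.closure_inter ⟨h.subset_closure_left hW hx.1, hx.2⟩
  obtain ⟨x, hx, hxA, hxB⟩ := isPreconnected_closed_iff.1 hWO _ _ isClosed_closure
    isClosed_closure hcl (h.inter_closure_nonempty_of_separation hO' hA hB hAB hunion hu' hv')
    (h.inter_closure_nonempty_of_separation hO' hB hA hAB.symm
      (union_comm (U ∩ O ∩ v) _ ▸ hunion) hv' hu')
  exact h.not_disjoint_of_mem_closure hO hA hB hunion hx hxA hxB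
    (h.symm.subset_closure_left hW hx.1) hAB

end IsWall

theorem isPreconnected_preimage_val_iff [TopologicalSpace M] {X S : Set M} :
    IsPreconnected (Subtype.val ⁻¹' S : Set X) ↔ IsPreconnected (X ∩ S) := by
  rw [← Topology.IsInducing.subtypeVal.isPreconnected_image, Subtype.image_preimage_coe]

/-! ### Dehyperplanes and flats -/

theorem signType_ne_zero_iff_eq_or_eq_neg {s t : SignType} (hs : s ≠ 0) :
    t ≠ 0 ↔ t = s ∨ t = -s := by
  decide +revert

namespace Dehyperplane

variable {N n : ℕ} {T X C : Set (Euc N)} (P : Dehyperplane N n T) {s : SignType} {x y : Euc N}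

theorem isClosed_P : IsClosed P.P := by
  rw [← P.closure_eq]
  exact isClosed_closure.inter isClosed_closure

open Classical in
/-- The sign `ε` with `x ∈ P^ε`, for points `x` of the ambient simanifold; outside of it `0` is a
junk value. -/
def sign (x : Euc N) : SignType := if x ∈ P.plus then 1 else if x ∈ P.minus then -1 else 0

theorem mem_part_iff (hx : x ∈ T) : x ∈ P.part s ↔ P.sign x = s := by
  have hcover : (x ∈ P.plus ∨ x ∈ P.P) ∨ x ∈ P.minus := P.union_eq.symm.subset hx
  have hpP : x ∈ P.plus → x ∉ P.P := (disjoint_left.1 P.disj_pP ·)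
  have hpm : x ∈ P.plus → x ∉ P.minus := (disjoint_left.1 P.disj_pm ·)
  have hPm : x ∈ P.P → x ∉ P.minus := (disjoint_left.1 P.disj_Pm ·)
  unfold sign
  cases s <;> split_ifs <;> simp_all [part]

theorem sign_eq_zero_iff (hx : x ∈ T) : P.sign x = 0 ↔ x ∈ P.P := (P.mem_part_iff hx).symm

theorem closure_part_inter_closure_part_neg (hs : s ≠ 0) :
    closure (P.part s) ∩ closure (P.part (-s)) = P.P := by
  cases s
  · exact absurd rfl hs
  · exact (inter_comm _ _).trans P.closure_eq
  · exact P.closure_eq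

theorem part_iff_notMem_closure (hx : x ∈ T) (hs : s ≠ 0) :
    x ∈ P.part s ↔ x ∉ closure (P.part (-s)) := by
  have hclosure := P.closure_part_inter_closure_part_neg hs
  constructor
  · intro h h'
    have h0 := (P.sign_eq_zero_iff hx).2 (hclosure.subset ⟨subset_closure h, h'⟩)
    exact hs (((P.mem_part_iff hx).1 h).symm.trans h0)
  · intro h
    have hneg : P.sign x ≠ -s := fun h' => h (subset_closure ((P.mem_part_iff hx).2 h'))
    have hzero : P.sign x ≠ 0 := fun h' =>
      h (hclosure.symm.subset ((P.sign_eq_zero_iff hx).1 h')).2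
    exact (P.mem_part_iff hx).2 <|
      ((signType_ne_zero_iff_eq_or_eq_neg hs).1 hzero).resolve_right hneg

theorem isOpen_preimage_part (hX : X ⊆ T) (hs : s ≠ 0) :
    IsOpen (Subtype.val ⁻¹' P.part s : Set X) := by
  have : (Subtype.val ⁻¹' P.part s : Set X) = Subtype.val ⁻¹' (closure (P.part (-s)))ᶜ :=
    ext fun x => P.part_iff_notMem_closure (hX x.2) hs
  rw [this]
  exact isClosed_closure.isOpen_compl.preimage continuous_subtype_val

theorem sign_eq_of_isPreconnected (hC : IsPreconnected C) (hCT : C ⊆ T)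
    (hCP : ¬ (P.P ∩ C).Nonempty) (hx : x ∈ C) (hy : y ∈ C) : P.sign x = P.sign y := by
  have := isPreconnected_iff_preconnectedSpace.1 hC
  have hconst : IsLocallyConstant fun z : C => P.sign z := by
    refine IsLocallyConstant.iff_isOpen_fiber.2 fun s => ?_
    have hfiber : {z : C | P.sign z = s} = Subtype.val ⁻¹' P.part s :=
      ext fun z => (P.mem_part_iff (hCT z.2)).symm
    obtain rfl | hs := eq_or_ne s 0
    · convert isOpen_empty
      exact hfiber.trans (eq_empty_of_forall_notMem fun z hz => hCP ⟨z, hz, z.2⟩)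
    · exact (congrArg IsOpen hfiber).mpr (P.isOpen_preimage_part hCT hs)
  exact hconst.apply_eq_of_preconnectedSpace ⟨x, hx⟩ ⟨y, hy⟩

/-- The dehyperplane `P` meets `X` but does not contain it. -/
def Crosses (X : Set (Euc N)) : Prop := (P.P ∩ X).Nonempty ∧ ¬ X ⊆ P.P

theorem sign_eq_of_not_crosses (hX : IsPreconnected X) (hXT : X ⊆ T) (hP : ¬ P.Crosses X)
    (hx : x ∈ X) (hy : y ∈ X) : P.sign x = P.sign y := by
  by_cases hne : (P.P ∩ X).Nonempty
  · have hXP : X ⊆ P.P := by_contra fun h => hP ⟨hne, h⟩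
    rw [(P.sign_eq_zero_iff (hXT hx)).2 (hXP hx), (P.sign_eq_zero_iff (hXT hy)).2 (hXP hy)]
  · exact P.sign_eq_of_isPreconnected hX hXT hne hx hy

end Dehyperplane

section Flats

variable {N n : ℕ} {T X : Set (Euc N)} {A : Set (Dehyperplane N n T)}

theorem subset_of_mem_flats (hX : X ∈ flats A) : X ⊆ T := by
  obtain ⟨-, B, -, rfl⟩ := hX
  exact inter_subset_left

theorem finite_flats (hA : A.Finite) : (flats A).Finite := by
  refine (hA.finite_subsets.image fun B => T ∩ ⋂ P ∈ B, P.P).subset ?_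
  rintro X ⟨-, B, hB, rfl⟩
  exact ⟨B, hB, rfl⟩

theorem inter_mem_flats {P : Dehyperplane N n T} (hP : P ∈ A) (hX : X ∈ flats A)
    (hne : (P.P ∩ X).Nonempty) : P.P ∩ X ∈ flats A := by
  obtain ⟨-, B, hB, rfl⟩ := hX
  exact ⟨hne, insert P B, insert_subset hP hB, by rw [biInter_insert, inter_left_comm]⟩

theorem inter_closure_subset_of_mem_flats (hX : X ∈ flats A) : T ∩ closure X ⊆ X := by
  obtain ⟨-, B, -, rfl⟩ := hX
  have hclosed : IsClosed (⋂ P ∈ B, P.P) := isClosed_biInter fun P _ => P.isClosed_P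
  exact inter_subset_inter_right T (hclosed.closure_subset_iff.2 inter_subset_right)

theorem mem_flats_iff : X ∈ flats A ↔ X.Nonempty ∧ X = T ∩ ⋂ P ∈ {P ∈ A | X ⊆ P.P}, P.P := by
  refine and_congr_right fun _ => ⟨?_, fun h => ⟨_, fun P hP => hP.1, h⟩⟩
  rintro ⟨B, hB, rfl⟩
  refine Subset.antisymm (subset_inter inter_subset_left (subset_iInter₂ fun P hP => hP.2)) ?_
  exact inter_subset_inter_right _ (biInter_subset_biInter_left fun P hP =>
    ⟨hB hP, inter_subset_right.trans (biInter_subset_of_mem hP)⟩)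

end Flats

namespace IsDA

variable {N n : ℕ} {T X : Set (Euc N)} {A : Set (Dehyperplane N n T)} {P : Dehyperplane N n T}
  {s : SignType}

theorem exists_isSimanifold (hA : IsDA n T A) (hT : IsSimanifold n T) (hX : X ∈ flats A) :
    ∃ d, IsSimanifold d X := by
  obtain ⟨hne, B, hB, rfl⟩ := hX
  have hfin : B.Finite := hA.1.subset hB
  induction B, hfin using Set.Finite.induction_on with
  | empty => exact ⟨n, by simpa using hT⟩
  | @insert P B _ _ ih =>
    rw [biInter_insert, inter_left_comm] at hne ⊢
    obtain ⟨hP, hB'⟩ := insert_subset_iff.1 hB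
    have hne' := hne.mono inter_subset_right
    rcases hA.2 P hP _ ⟨hne', B, hB', rfl⟩ hne with h | ⟨i, -, -, h, -⟩
    · rw [inter_eq_right.2 h]
      exact ih hB' hne'
    · exact ⟨_, h⟩

theorem isPreconnected (hA : IsDA n T A) (hT : IsSimanifold n T) (hX : X ∈ flats A) :
    IsPreconnected X :=
  (hA.exists_isSimanifold hT hX).choose_spec.isPreconnected

theorem exists_isSimanifold_of_crosses (hA : IsDA n T A) (hT : IsSimanifold n T)
    (hX : X ∈ flats A) (hP : P ∈ A) (hPX : P.Crosses X) :
    ∃ i, IsSimanifold (i + 1) X ∧ IsSimanifold i (P.P ∩ X) ∧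
      ∀ s, s ≠ 0 → IsSimanifold (i + 1) (P.part s ∩ X) := by
  obtain ⟨d, hd⟩ := hA.exists_isSimanifold hT hX
  obtain ⟨i, hi, -, h0, hp, hm⟩ := (hA.2 P hP X hX hPX.1).resolve_left hPX.2
  obtain ⟨i, rfl⟩ := Nat.exists_eq_add_of_le' hi
  obtain ⟨x, hx⟩ := hp.1
  have hplus {y} (hy : y ∈ X) : y ∈ P.plus ↔ y ∉ closure P.minus :=
    P.part_iff_notMem_closure (s := 1) (subset_of_mem_flats hX hy) (by decide)
  have hle : i + 1 ≤ d :=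
    hp.le_of_inter_subset hd hx isOpen_univ (mem_univ x) fun y hy => hy.1.2
  have hge : d ≤ i + 1 := hd.le_of_inter_subset hp hx.2 isClosed_closure.isOpen_compl
    ((hplus hx.2).1 hx.1) fun y hy => ⟨(hplus hy.1).2 hy.2, hy.1⟩
  obtain rfl := hle.antisymm hge
  refine ⟨i, hd, h0, fun s hs => ?_⟩
  cases s
  exacts [absurd rfl hs, hm, hp]

theorem isWall (hA : IsDA n T A) (hT : IsSimanifold n T) (hX : X ∈ flats A) (hP : P ∈ A)
    (hPX : P.Crosses X) (hs : s ≠ 0) :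
    IsWall (Subtype.val ⁻¹' P.P : Set X) (Subtype.val ⁻¹' P.part s)
      (Subtype.val ⁻¹' P.part (-s)) := by
  obtain ⟨i, hi, h0, hside⟩ := hA.exists_isSimanifold_of_crosses hT hX hP hPX
  have hXT := subset_of_mem_flats hX
  have hneg : -s ≠ 0 := mt SignType.neg_eq_zero_iff.1 hs
  have hne {t : SignType} (ht : t ≠ 0) : (Subtype.val ⁻¹' P.part t : Set X).Nonempty :=
    (hside t ht).1.elim fun x hx => ⟨⟨x, hx.2⟩, hx.1⟩
  refine ⟨P.isOpen_preimage_part hXT hs, P.isOpen_preimage_part hXT hneg,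
    disjoint_left.2 fun x hx hx' => ?_, ext fun x => ?_, hne hs, hne hneg, fun x hx => ?_⟩
  · rw [mem_preimage, P.mem_part_iff (hXT x.2)] at hx hx'
    exact hs (SignType.self_eq_neg_iff.1 (hx.symm.trans hx'))
  · rw [mem_union, mem_compl_iff, mem_preimage, mem_preimage, mem_preimage,
      P.mem_part_iff (hXT x.2), P.mem_part_iff (hXT x.2), ← P.sign_eq_zero_iff (hXT x.2),
      ← ne_eq, signType_ne_zero_iff_eq_or_eq_neg hs]
  · have := hi.hasTwoSidesAt h0 inter_subset_right ⟨hx, x.2⟩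
    rwa [preimage_inter, Subtype.coe_preimage_self, inter_univ] at this

theorem inter_subset_closure_part_inter (hA : IsDA n T A) (hT : IsSimanifold n T)
    (hX : X ∈ flats A) (hP : P ∈ A) (hs : s ≠ 0) (hPX : P.Crosses X) :
    P.P ∩ X ⊆ closure (P.part s ∩ X) := by
  have := isPreconnected_iff_preconnectedSpace.1 (hA.isPreconnected hT hX)
  have hwall : IsPreconnected (Subtype.val ⁻¹' P.P : Set X) :=
    isPreconnected_preimage_val_iff.2 <| inter_comm X P.P ▸
      hA.isPreconnected hT (inter_mem_flats hP hX hPX.1)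
  intro x hx
  have := closure_subtype.1 ((hA.isWall hT hX hP hPX hs).subset_closure_left hwall
    (show ⟨x, hx.2⟩ ∈ _ from hx.1))
  rwa [Subtype.image_preimage_coe, inter_comm] at this

end IsDA

/-! ### Cells and the Euler relation -/

section Cells

variable {N n : ℕ} {T X F : Set (Euc N)} {A S : Set (Dehyperplane N n T)}
  {P : Dehyperplane N n T} {x y : Euc N}

/-- The face of `S` through the point `x`, i.e. the points of `T` with the same signs as `x`. -/
def cell (S : Set (Dehyperplane N n T)) (x : Euc N) : Set (Euc N) :=
  {y ∈ T | ∀ P ∈ S, P.sign y = P.sign x}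

/-- The smallest flat of `S` containing `F`. -/
def flatSpan (S : Set (Dehyperplane N n T)) (F : Set (Euc N)) : Set (Euc N) :=
  T ∩ ⋂ P ∈ {P ∈ S | F ⊆ P.P}, P.P

theorem mem_cell_self (S : Set (Dehyperplane N n T)) (hx : x ∈ T) : x ∈ cell S x :=
  ⟨hx, fun _ _ => rfl⟩

theorem cell_eq_of_mem (hy : y ∈ cell S x) : cell S y = cell S x :=
  ext fun _ => and_congr_right fun _ => forall₂_congr fun P hP => by rw [hy.2 P hP]

theorem mem_cell_insert : y ∈ cell (insert P S) x ↔ y ∈ cell S x ∧ P.sign y = P.sign x := by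
  simp only [cell, mem_ofPred_eq, forall_mem_insert]
  tauto

theorem finite_range_cell (hA : A.Finite) : (range (cell A)).Finite := by
  have := hA.to_subtype
  refine (finite_range fun (σ : A → SignType) => {y ∈ T | ∀ P : A, P.1.sign y = σ P}).subset ?_
  rintro _ ⟨x, rfl⟩
  exact ⟨fun P => P.1.sign x, by simp [cell]⟩

theorem cell_subset_P_iff (hP : P ∈ S) (hx : x ∈ T) : cell S x ⊆ P.P ↔ x ∈ P.P := by
  refine ⟨fun h => h (mem_cell_self S hx), fun h y hy => ?_⟩
  rw [← P.sign_eq_zero_iff hy.1, hy.2 P hP, P.sign_eq_zero_iff hx]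
  exact h

theorem subset_flatSpan (hF : F ⊆ T) : F ⊆ flatSpan S F :=
  subset_inter hF (subset_iInter₂ fun _ hP => hP.2)

theorem cell_subset_flatSpan : cell S x ⊆ flatSpan S (cell S x) :=
  subset_flatSpan (sep_subset _ _)

theorem flatSpan_mem_flats (hS : S ⊆ A) (hF : F ⊆ T) (hne : F.Nonempty) :
    flatSpan S F ∈ flats A :=
  ⟨hne.mono (subset_flatSpan hF), _, (sep_subset _ _).trans hS, rfl⟩

theorem flatSpan_cell_mem_flats (hS : S ⊆ A) (hx : x ∈ T) : flatSpan S (cell S x) ∈ flats A :=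
  flatSpan_mem_flats hS (sep_subset _ _) ⟨x, mem_cell_self S hx⟩

theorem flatSpan_eq_self (hX : X ∈ flats A) : flatSpan A X = X :=
  (mem_flats_iff.1 hX).2.symm

theorem mem_flatSpan_cell (hx : x ∈ T) :
    y ∈ flatSpan S (cell S x) ↔ y ∈ T ∧ ∀ P ∈ S, x ∈ P.P → y ∈ P.P := by
  simp only [flatSpan, mem_inter_iff, mem_iInter₂, mem_ofPred_eq, and_imp]
  exact and_congr_right fun _ => forall₂_congr fun P hP => by rw [cell_subset_P_iff hP hx]

theorem flatSpan_cell_insert_of_mem (hx : x ∈ T) (hxP : x ∈ P.P) :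
    flatSpan (insert P S) (cell (insert P S) x) = P.P ∩ flatSpan S (cell S x) := by
  ext y
  rw [mem_inter_iff, mem_flatSpan_cell hx, mem_flatSpan_cell hx, forall_mem_insert]
  tauto

theorem flatSpan_cell_insert_of_notMem (hx : x ∈ T) (hxP : x ∉ P.P) :
    flatSpan (insert P S) (cell (insert P S) x) = flatSpan S (cell S x) := by
  ext y
  rw [mem_flatSpan_cell hx, mem_flatSpan_cell hx, forall_mem_insert]
  tauto

theorem cell_eq_flatSpan_inter (hx : x ∈ T) :
    cell S x = flatSpan S (cell S x) ∩ ⋂ P ∈ {P ∈ S | x ∉ P.P}, P.part (P.sign x) := by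
  refine Subset.antisymm (subset_inter cell_subset_flatSpan fun y hy => mem_iInter₂.2 fun P hP =>
    (P.mem_part_iff hy.1).2 (hy.2 P hP.1)) ?_
  rintro y ⟨hy, hy'⟩
  obtain ⟨hyT, hyP⟩ := (mem_flatSpan_cell hx).1 hy
  refine ⟨hyT, fun P hP => ?_⟩
  by_cases hxP : x ∈ P.P
  · rw [(P.sign_eq_zero_iff hx).2 hxP, P.sign_eq_zero_iff hyT]
    exact hyP P hP hxP
  · exact (P.mem_part_iff hyT).1 (mem_iInter₂.1 hy' P ⟨hP, hxP⟩)

theorem isOpen_preimage_biInter_part (hS : S.Finite) (hX : X ⊆ T)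
    {τ : Dehyperplane N n T → SignType} (hτ : ∀ P ∈ S, τ P ≠ 0) :
    IsOpen (Subtype.val ⁻¹' ⋂ P ∈ S, P.part (τ P) : Set X) := by
  rw [preimage_iInter₂]
  exact hS.isOpen_biInter fun P hP => P.isOpen_preimage_part hX (hτ P hP)

theorem isOpen_preimage_cell (hS : S.Finite) (hx : x ∈ T) :
    IsOpen (Subtype.val ⁻¹' cell S x : Set (flatSpan S (cell S x))) := by
  have hcell : (Subtype.val ⁻¹' cell S x : Set (flatSpan S (cell S x))) =
      Subtype.val ⁻¹' ⋂ P ∈ {P ∈ S | x ∉ P.P}, P.part (P.sign x) :=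
    ext fun y => ⟨fun h => ((cell_eq_flatSpan_inter hx).subset h).2,
      fun h => (cell_eq_flatSpan_inter hx).superset ⟨y.2, h⟩⟩
  rw [hcell]
  exact isOpen_preimage_biInter_part (hS.subset (sep_subset _ _)) inter_subset_left
    fun P hP => mt (P.sign_eq_zero_iff hx).1 hP.2

theorem cell_eq_iUnion_cell_insert {y : SignType → Euc N} (hy : ∀ s, y s ∈ cell S x)
    (hsign : ∀ s, P.sign (y s) = s) : cell S x = ⋃ s, cell (insert P S) (y s) := by
  ext z
  simp only [mem_iUnion, mem_cell_insert, cell_eq_of_mem (hy _), hsign]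
  simp

theorem finsum_cell_eq_sum_finsum_cell_insert {B : Set (Dehyperplane N n T)} (hB : B.Finite)
    (hPB : P ∈ B) {y : SignType → Euc N} (hy : ∀ s, y s ∈ cell S x)
    (hsign : ∀ s, P.sign (y s) = s) (f : Set (Euc N) → ℤ) :
    ∑ᶠ F ∈ cell B '' cell S x, f F =
      ∑ s, ∑ᶠ F ∈ cell B '' cell (insert P S) (y s), f F := by
  rw [cell_eq_iUnion_cell_insert hy hsign, image_iUnion, finsum_mem_iUnion,
    finsum_eq_sum_of_fintype]
  · refine fun s t hst => disjoint_left.2 ?_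
    rintro _ ⟨z, hz, rfl⟩ ⟨w, hw, hwz⟩
    have hzw : P.sign w = P.sign z := (hwz.subset (mem_cell_self B hw.1)).2 P hPB
    exact hst <| by
      rw [← hsign s, ← hsign t, ← (mem_cell_insert.1 hz).2, ← (mem_cell_insert.1 hw).2, hzw]
  · exact fun s => (finite_range_cell hB).subset (image_subset_range _ _)

end Cells

namespace IsDA

variable {N n : ℕ} {T X : Set (Euc N)} {A S R : Set (Dehyperplane N n T)}
  {P : Dehyperplane N n T} {x : Euc N} {s : SignType}

theorem isPreconnected_inter_biInter_part (hA : IsDA n T A) (hT : IsSimanifold n T)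
    (hX : X ∈ flats A) (hS : S ⊆ A) {τ : Dehyperplane N n T → SignType}
    (hτ : ∀ P ∈ S, τ P ≠ 0) : IsPreconnected (X ∩ ⋂ P ∈ S, P.part (τ P)) := by
  have hfin : S.Finite := hA.1.subset hS
  induction S, hfin using Set.Finite.induction_on generalizing X with
  | empty => simpa using hA.isPreconnected hT hX
  | @insert P S _ hfin ih =>
    obtain ⟨hP, hS⟩ := insert_subset_iff.1 hS
    obtain ⟨hτP, hτ⟩ := forall_mem_insert.1 hτ
    have hXT := subset_of_mem_flats hX
    have hpre := hA.isPreconnected hT hX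
    rw [biInter_insert]
    by_cases hPX : P.Crosses X
    · have := isPreconnected_iff_preconnectedSpace.1 hpre
      have hwall := hA.isPreconnected hT (inter_mem_flats hP hX hPX.1)
      rw [← isPreconnected_preimage_val_iff, preimage_inter]
      refine (hA.isWall hT hX hP hPX hτP).isPreconnected_inter_left
        (isPreconnected_preimage_val_iff.2 (inter_comm X P.P ▸ hwall))
        (isOpen_preimage_biInter_part hfin hXT hτ)
        (isPreconnected_preimage_val_iff.2 (ih hX hS hτ)) ?_
      rw [← preimage_inter, isPreconnected_preimage_val_iff, ← inter_assoc, inter_comm X]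
      exact ih (inter_mem_flats hP hX hPX.1) hS hτ
    · have hsign {y z} (hy : y ∈ X) (hz : z ∈ X) : y ∈ P.part (τ P) ↔ z ∈ P.part (τ P) := by
        rw [P.mem_part_iff (hXT hy), P.mem_part_iff (hXT hz),
          P.sign_eq_of_not_crosses hpre hXT hPX hy hz]
      rw [← inter_assoc]
      rcases (X ∩ P.part (τ P)).eq_empty_or_nonempty with hempty | ⟨y, hy, hyP⟩
      · simpa [hempty] using isPreconnected_empty
      · rw [inter_eq_left.2 fun z hz => (hsign hy hz).1 hyP]
        exact ih hX hS hτ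

theorem isPreconnected_cell (hA : IsDA n T A) (hT : IsSimanifold n T) (hS : S ⊆ A) (hx : x ∈ T) :
    IsPreconnected (cell S x) := by
  rw [cell_eq_flatSpan_inter hx]
  exact hA.isPreconnected_inter_biInter_part hT (flatSpan_cell_mem_flats hS hx)
    ((sep_subset _ _).trans hS) fun P hP => mt (P.sign_eq_zero_iff hx).1 hP.2

theorem exists_mem_cell_sign_eq (hA : IsDA n T A) (hT : IsSimanifold n T) (hS : S ⊆ A)
    (hP : P ∈ A) (hx : x ∈ T) (hne : (P.P ∩ cell S x).Nonempty)
    (hPX : P.Crosses (flatSpan S (cell S x))) (s : SignType) : ∃ y ∈ cell S x, P.sign y = s := by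
  obtain ⟨z, hzP, hz⟩ := hne
  obtain rfl | hs := eq_or_ne s 0
  · exact ⟨z, hz, (P.sign_eq_zero_iff hz.1).2 hzP⟩
  · have hX := flatSpan_cell_mem_flats hS hx
    obtain ⟨U, hU, hcell⟩ := isOpen_induced_iff.1 (isOpen_preimage_cell (hA.1.subset hS) hx)
    have hmem {y} (hy : y ∈ flatSpan S (cell S x)) : y ∈ U ↔ y ∈ cell S x :=
      Set.ext_iff.1 hcell ⟨y, hy⟩
    have hzX := cell_subset_flatSpan hz
    have hz' := hA.inter_subset_closure_part_inter hT hX hP hs hPX ⟨hzP, hzX⟩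
    obtain ⟨y, hyU, hyP, hyX⟩ := mem_closure_iff.1 hz' U hU ((hmem hzX).2 hz)
    have hy := (hmem hyX).1 hyU
    exact ⟨y, hy, (P.mem_part_iff hy.1).1 hyP⟩

theorem cell_insert_eq_of_not_crosses (hA : IsDA n T A) (hT : IsSimanifold n T) (hS : S ⊆ A)
    (hx : x ∈ T) (h : ¬ (P.Crosses (flatSpan S (cell S x)) ∧ (P.P ∩ cell S x).Nonempty)) :
    cell (insert P S) x = cell S x := by
  have hX := flatSpan_cell_mem_flats hS hx
  refine ext fun y => mem_cell_insert.trans (and_iff_left_of_imp fun hy => ?_)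
  by_cases hPX : P.Crosses (flatSpan S (cell S x))
  · exact P.sign_eq_of_isPreconnected (hA.isPreconnected_cell hT hS hx) (sep_subset _ _)
      (fun hne => h ⟨hPX, hne⟩) hy (mem_cell_self S hx)
  · exact P.sign_eq_of_not_crosses (hA.isPreconnected hT hX) (subset_of_mem_flats hX) hPX
      (cell_subset_flatSpan hy) (cell_subset_flatSpan (mem_cell_self S hx))

theorem flatSpan_cell_insert_eq_of_not_crosses (hx : x ∈ T)
    (h : ¬ (P.Crosses (flatSpan S (cell S x)) ∧ (P.P ∩ cell S x).Nonempty)) :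
    flatSpan (insert P S) (cell (insert P S) x) = flatSpan S (cell S x) := by
  have hmem := mem_cell_self S hx
  by_cases hxP : x ∈ P.P
  · have hsub : flatSpan S (cell S x) ⊆ P.P := by_contra fun hsub =>
      h ⟨⟨⟨x, hxP, cell_subset_flatSpan hmem⟩, hsub⟩, ⟨x, hxP, hmem⟩⟩
    rw [flatSpan_cell_insert_of_mem hx hxP, inter_eq_right.2 hsub]
  · exact flatSpan_cell_insert_of_notMem hx hxP

theorem sum_neg_one_pow_sdim_of_crosses (hA : IsDA n T A) (hT : IsSimanifold n T) (hS : S ⊆ A)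
    (hP : P ∈ A) (hx : x ∈ T) (hPX : P.Crosses (flatSpan S (cell S x)))
    {y : SignType → Euc N} (hy : ∀ s, y s ∈ cell S x) (hsign : ∀ s, P.sign (y s) = s) :
    ∑ s, (-1 : ℤ) ^ sdim (flatSpan (insert P S) (cell (insert P S) (y s))) =
      (-1) ^ sdim (flatSpan S (cell S x)) := by
  obtain ⟨i, hX, hwall, -⟩ :=
    hA.exists_isSimanifold_of_crosses hT (flatSpan_cell_mem_flats hS hx) hP hPX
  have hdim (s) : sdim (flatSpan (insert P S) (cell (insert P S) (y s))) =
      if s = 0 then i else i + 1 := by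
    have hspan := congrArg (flatSpan S) (cell_eq_of_mem (hy s))
    split_ifs with hs
    · have hmem : y s ∈ P.P := (P.sign_eq_zero_iff (hy s).1).1 ((hsign s).trans hs)
      rw [flatSpan_cell_insert_of_mem (hy s).1 hmem, hspan, hwall.sdim_eq]
    · have hmem : y s ∉ P.P := fun h =>
        hs ((hsign s).symm.trans ((P.sign_eq_zero_iff (hy s).1).2 h))
      rw [flatSpan_cell_insert_of_notMem (hy s).1 hmem, hspan, hX.sdim_eq]
  have huniv : (Finset.univ : Finset SignType) = {0, -1, 1} := rfl
  rw [Finset.sum_congr rfl fun s _ => by rw [hdim s], hX.sdim_eq, huniv]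
  simp [pow_succ]

/-- Adding dehyperplanes one at a time, each either changes nothing or splits a cell into a wall and
its two sides, and `(-1) ^ i + 2 * (-1) ^ (i + 1) = (-1) ^ (i + 1)`. -/
theorem finsum_cell_neg_one_pow_sdim (hA : IsDA n T A) (hT : IsSimanifold n T) (hSR : S ∪ R ⊆ A)
    (hx : x ∈ T) :
    ∑ᶠ F ∈ cell (S ∪ R) '' cell S x, (-1 : ℤ) ^ sdim (flatSpan (S ∪ R) F) =
      (-1) ^ sdim (flatSpan S (cell S x)) := by
  have hR : R.Finite := hA.1.subset (subset_union_right.trans hSR)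
  induction R, hR using Set.Finite.induction_on generalizing S x with
  | empty =>
    have himage : cell S '' cell S x = {cell S x} :=
      (Nonempty.image_const ⟨x, mem_cell_self S hx⟩ _).symm ▸
        image_congr fun y hy => cell_eq_of_mem hy
    simp [himage]
  | @insert P R _ _ ih =>
    obtain ⟨hS, hPR⟩ := union_subset_iff.1 hSR
    have hP : P ∈ A := hPR (mem_insert P R)
    rw [union_insert, ← insert_union] at hSR ⊢
    by_cases h : P.Crosses (flatSpan S (cell S x)) ∧ (P.P ∩ cell S x).Nonempty
    · obtain ⟨hPX, hne⟩ := h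
      choose y hy hsign using hA.exists_mem_cell_sign_eq hT hS hP hx hne hPX
      have hPB : P ∈ insert P S ∪ R := Or.inl (mem_insert P S)
      rw [finsum_cell_eq_sum_finsum_cell_insert (hA.1.subset hSR) hPB hy hsign,
        Finset.sum_congr rfl fun s _ => ih hSR (hy s).1]
      exact hA.sum_neg_one_pow_sdim_of_crosses hT hS hP hx hPX hy hsign
    · rw [← hA.cell_insert_eq_of_not_crosses hT hS hx h, ih hSR hx,
        flatSpan_cell_insert_eq_of_not_crosses hx h,
        hA.cell_insert_eq_of_not_crosses hT hS hx h]

end IsDA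

section Faces

variable {N n : ℕ} {T X F : Set (Euc N)} {A S : Set (Dehyperplane N n T)} {x : Euc N}
  {ε : Dehyperplane N n T → SignType}

theorem inter_biInter_part_eq_cell (hε : ∀ P ∈ S, P.sign x = ε P) :
    T ∩ ⋂ P ∈ S, P.part (ε P) = cell S x := by
  ext y
  rw [mem_inter_iff, mem_iInter₂]
  exact and_congr_right fun hy => forall₂_congr fun P hP => by rw [P.mem_part_iff hy, hε P hP]

theorem sign_eq_of_mem_biInter_part (hx : x ∈ T ∩ ⋂ P ∈ S, P.part (ε P)) :
    ∀ P ∈ S, P.sign x = ε P :=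
  fun P hP => (P.mem_part_iff hx.1).1 (mem_iInter₂.1 hx.2 P hP)

theorem isFace_iff : IsFace A F ↔ ∃ x ∈ T, cell A x = F := by
  constructor
  · rintro ⟨⟨x, hx⟩, ε, rfl⟩
    exact ⟨x, hx.1, (inter_biInter_part_eq_cell (sign_eq_of_mem_biInter_part hx)).symm⟩
  · rintro ⟨x, hx, rfl⟩
    exact ⟨⟨x, mem_cell_self A hx⟩, fun P => P.sign x,
      (inter_biInter_part_eq_cell fun _ _ => rfl).symm⟩

theorem isChamber_iff : IsChamber A F ↔ ∃ x ∈ T, (∀ P ∈ A, x ∉ P.P) ∧ cell A x = F := by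
  constructor
  · rintro ⟨⟨x, hx⟩, ε, hε, rfl⟩
    have hsign := sign_eq_of_mem_biInter_part hx
    refine ⟨x, hx.1, fun P hP hxP => hε P hP ?_, (inter_biInter_part_eq_cell hsign).symm⟩
    rw [← hsign P hP, P.sign_eq_zero_iff hx.1]
    exact hxP
  · rintro ⟨x, hx, hxA, rfl⟩
    exact ⟨⟨x, mem_cell_self A hx⟩, fun P => P.sign x,
      fun P hP => mt (P.sign_eq_zero_iff hx).1 (hxA P hP),
      (inter_biInter_part_eq_cell fun _ _ => rfl).symm⟩

theorem IsFace.subset (hF : IsFace A F) : F ⊆ T := by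
  obtain ⟨-, ε, rfl⟩ := hF
  exact inter_subset_left

theorem finite_setOf_isFace (hA : A.Finite) : {F | IsFace A F}.Finite :=
  (finite_range_cell hA).subset fun _ hF => (isFace_iff.1 hF).imp fun _ => And.right

theorem image_cell_of_mem_flats (hX : X ∈ flats A) :
    cell A '' X = {F | IsFace A F ∧ flatSpan A F ⊆ X} := by
  ext F
  constructor
  · rintro ⟨x, hx, rfl⟩
    have hxT := subset_of_mem_flats hX hx
    refine ⟨isFace_iff.2 ⟨x, hxT, rfl⟩, fun y hy => ?_⟩
    obtain ⟨hyT, hy⟩ := (mem_flatSpan_cell hxT).1 hy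
    rw [← flatSpan_eq_self hX]
    exact ⟨hyT, mem_iInter₂.2 fun P hP => hy P hP.1 (hP.2 hx)⟩
  · rintro ⟨hF, hFX⟩
    obtain ⟨x, hx, rfl⟩ := isFace_iff.1 hF
    exact ⟨x, hFX (cell_subset_flatSpan (mem_cell_self A hx)), rfl⟩

theorem IsDA.finsum_isFace_neg_one_pow_sdim (hA : IsDA n T A) (hT : IsSimanifold n T)
    (hX : X ∈ flats A) :
    ∑ᶠ F ∈ {F | IsFace A F ∧ flatSpan A F ⊆ X}, (-1 : ℤ) ^ sdim (flatSpan A F) =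
      (-1) ^ sdim X := by
  obtain ⟨hne, hXeq⟩ := mem_flats_iff.1 hX
  obtain ⟨x, hx⟩ := hne
  have hxT := subset_of_mem_flats hX hx
  have hunion : {P ∈ A | X ⊆ P.P} ∪ A = A := union_eq_right.2 (sep_subset _ _)
  have hcell : cell {P ∈ A | X ⊆ P.P} x = X := by
    conv_rhs => rw [hXeq]
    exact (inter_biInter_part_eq_cell (ε := 0) fun P hP =>
      (P.sign_eq_zero_iff hxT).2 (hP.2 hx)).symm
  have hspan : flatSpan {P ∈ A | X ⊆ P.P} X = X := by
    conv_rhs => rw [hXeq]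
    simp [flatSpan]
  have heuler := hA.finsum_cell_neg_one_pow_sdim hT (hunion.le) hxT
  rwa [hunion, hcell, hspan, image_cell_of_mem_flats hX] at heuler

end Faces

/-! ### Restriction to a flat -/

theorem sign_restrict {N n m : ℕ} {T X : Set (Euc N)} {P : Dehyperplane N n T}
    {Q : Dehyperplane N m X} (hplus : Q.plus = P.plus ∩ X) (hminus : Q.minus = P.minus ∩ X)
    {x : Euc N} (hx : x ∈ X) : Q.sign x = P.sign x := by
  have hmem {S S' : Set (Euc N)} (h : S' = S ∩ X) : x ∈ S' ↔ x ∈ S := by simp [h, hx]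
  classical exact if_congr (hmem hplus) rfl (if_congr (hmem hminus) rfl rfl)

namespace IsDA

variable {N n : ℕ} {T X F : Set (Euc N)} {A : Set (Dehyperplane N n T)} {P : Dehyperplane N n T}
  {x : Euc N}

theorem exists_mem_restrict (hA : IsDA n T A) (hT : IsSimanifold n T) (hX : X ∈ flats A)
    (hP : P ∈ A) (hPX : P.Crosses X) : ∃ Q ∈ restrict A (sdim X) X,
      Q.P = P.P ∩ X ∧ Q.plus = P.plus ∩ X ∧ Q.minus = P.minus ∩ X := by
  obtain ⟨i, hi, h0, hside⟩ := hA.exists_isSimanifold_of_crosses hT hX hP hPX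
  have hplus : P.P ∩ X ⊆ closure (P.plus ∩ X) :=
    hA.inter_subset_closure_part_inter hT hX hP (s := .pos) (by decide) hPX
  have hminus : P.P ∩ X ⊆ closure (P.minus ∩ X) :=
    hA.inter_subset_closure_part_inter hT hX hP (s := .neg) (by decide) hPX
  have hsub : closure (P.plus ∩ X) ∩ closure (P.minus ∩ X) ⊆ P.P ∩ X := by
    rintro x ⟨hp, hm⟩
    have hxP : x ∈ P.P := P.closure_eq.subset
      ⟨closure_mono inter_subset_left hp, closure_mono inter_subset_left hm⟩
    exact ⟨hxP, inter_closure_subset_of_mem_flats hX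
      ⟨P.union_eq.subset (Or.inl (Or.inr hxP)), closure_mono inter_subset_right hp⟩⟩
  refine ⟨⟨P.P ∩ X, P.plus ∩ X, P.minus ∩ X, ?_, ?_, ?_, ?_, ?_, ?_, ?_, ?_⟩,
    ⟨P, hP, hPX.2, hPX.1, rfl, rfl, rfl⟩, rfl, rfl, rfl⟩
  · rwa [hi.sdim_eq]
  · rw [hi.sdim_eq]
    exact hside 1 (by decide)
  · rw [hi.sdim_eq]
    exact hside (-1) (by decide)
  · rw [← union_inter_distrib_right, ← union_inter_distrib_right, P.union_eq]
    exact inter_eq_right.2 (subset_of_mem_flats hX)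
  · exact P.disj_pP.mono inter_subset_left inter_subset_left
  · exact P.disj_pm.mono inter_subset_left inter_subset_left
  · exact P.disj_Pm.mono inter_subset_left inter_subset_left
  · exact hsub.antisymm (subset_inter hplus hminus)

theorem forall_mem_restrict_notMem_iff (hA : IsDA n T A) (hT : IsSimanifold n T)
    (hX : X ∈ flats A) (hx : x ∈ X) :
    (∀ Q ∈ restrict A (sdim X) X, x ∉ Q.P) ↔ flatSpan A (cell A x) = X := by
  have hxT := subset_of_mem_flats hX hx
  constructor
  · intro h
    refine Subset.antisymm ?_ fun y hy => (mem_flatSpan_cell hxT).2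
      ⟨subset_of_mem_flats hX hy, fun P hP hxP => by_contra fun hyP => ?_⟩
    · exact ((image_cell_of_mem_flats hX).subset ⟨x, hx, rfl⟩).2
    · obtain ⟨Q, hQ, hQP, -⟩ :=
        hA.exists_mem_restrict hT hX hP ⟨⟨x, hxP, hx⟩, fun h => hyP (h hy)⟩
      exact h Q hQ (hQP.superset ⟨hxP, hx⟩)
  · rintro h Q ⟨P, hP, hXP, -, hQP, -⟩ hxQ
    exact hXP fun y hy => ((mem_flatSpan_cell hxT).1 (h.superset hy)).2 P hP (hQP.subset hxQ).1

theorem cell_restrict (hA : IsDA n T A) (hT : IsSimanifold n T) (hX : X ∈ flats A) (hx : x ∈ X) :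
    cell (restrict A (sdim X) X) x = X ∩ cell A x := by
  have hXT := subset_of_mem_flats hX
  ext y
  constructor
  · rintro ⟨hy, hsign⟩
    refine ⟨hy, hXT hy, fun P hP => ?_⟩
    by_cases hPX : P.Crosses X
    · obtain ⟨Q, hQ, -, hplus, hminus⟩ := hA.exists_mem_restrict hT hX hP hPX
      rw [← sign_restrict hplus hminus hy, ← sign_restrict hplus hminus hx, hsign Q hQ]
    · exact P.sign_eq_of_not_crosses (hA.isPreconnected hT hX) hXT hPX hy hx
  · rintro ⟨hy, -, hsign⟩
    refine ⟨hy, ?_⟩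
    rintro Q ⟨P, hP, -, -, -, hplus, hminus⟩
    rw [sign_restrict hplus hminus hy, sign_restrict hplus hminus hx, hsign P hP]

theorem isChamber_restrict_iff (hA : IsDA n T A) (hT : IsSimanifold n T) (hX : X ∈ flats A) :
    IsChamber (restrict A (sdim X) X) F ↔ IsFace A F ∧ flatSpan A F = X := by
  have hcell {x} (hx : x ∈ X) (h : flatSpan A (cell A x) = X) :
      cell (restrict A (sdim X) X) x = cell A x := by
    rw [hA.cell_restrict hT hX hx, inter_eq_right]
    exact cell_subset_flatSpan.trans h.subset
  rw [isChamber_iff, isFace_iff]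
  constructor
  · rintro ⟨x, hx, hxQ, rfl⟩
    have hspan := (hA.forall_mem_restrict_notMem_iff hT hX hx).1 hxQ
    rw [hcell hx hspan]
    exact ⟨⟨x, subset_of_mem_flats hX hx, rfl⟩, hspan⟩
  · rintro ⟨⟨x, hxT, rfl⟩, hspan⟩
    have hx : x ∈ X := hspan.subset (cell_subset_flatSpan (mem_cell_self A hxT))
    exact ⟨x, hx, (hA.forall_mem_restrict_notMem_iff hT hX hx).2 hspan, hcell hx hspan⟩

end IsDA

/-! ### Möbius inversion -/

section Moebius

variable {α ι R : Type*} [PartialOrder α] [CommRing R] {L : Set α} {I : Set ι} {mu : α → α → R}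
  {φ : ι → α} {a d : α}

open Classical in
theorem finsum_moebius_eq_ite (ha : a ∈ L) (hmu1 : mu a a = 1)
    (hmu2 : ∀ b ∈ L, b ≤ a → b ≠ a → ∑ᶠ c ∈ {c ∈ L | c ≤ a ∧ b ≤ c}, mu a c = 0) (hd : d ∈ L) :
    ∑ᶠ c ∈ {c ∈ L | c ≤ a ∧ d ≤ c}, mu a c = if d = a then 1 else 0 := by
  split_ifs with hda
  · have hsingleton : {c ∈ L | c ≤ a ∧ d ≤ c} = {a} := by
      subst hda
      exact Subset.antisymm (fun c hc => hc.2.1.antisymm hc.2.2)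
        (singleton_subset_iff.2 ⟨ha, le_rfl, le_rfl⟩)
    rw [hsingleton, finsum_mem_singleton, hmu1]
  · by_cases hle : d ≤ a
    · exact hmu2 d hd hle hda
    · have hempty : {c ∈ L | c ≤ a ∧ d ≤ c} = ∅ :=
        eq_empty_of_forall_notMem fun c hc => hle (hc.2.2.trans hc.2.1)
      rw [hempty, finsum_mem_empty]

theorem finsum_moebius_mul_finsum (hL : L.Finite) (hI : I.Finite) (hφ : MapsTo φ I L)
    (ha : a ∈ L) (hmu1 : mu a a = 1)
    (hmu2 : ∀ b ∈ L, b ≤ a → b ≠ a → ∑ᶠ c ∈ {c ∈ L | c ≤ a ∧ b ≤ c}, mu a c = 0) (g : ι → R) :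
    ∑ᶠ b ∈ {b ∈ L | b ≤ a}, mu a b * ∑ᶠ i ∈ {i ∈ I | φ i ≤ b}, g i =
      ∑ᶠ i ∈ {i ∈ I | φ i = a}, g i := by
  classical
  have hmu {d} (hd : d ∈ L) := finsum_moebius_eq_ite ha hmu1 hmu2 hd
  lift L to Finset α using hL
  lift I to Finset ι using hI
  simp only [Finset.mem_coe, ← Finset.coe_filter, finsum_mem_finset_eq_sum] at hmu ⊢
  calc ∑ b ∈ L with b ≤ a, mu a b * ∑ i ∈ I with φ i ≤ b, g i
      = ∑ b ∈ L with b ≤ a, ∑ i ∈ I, if φ i ≤ b then mu a b * g i else 0 := by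
        simp only [Finset.mul_sum, Finset.sum_filter, mul_ite, mul_zero]
    _ = ∑ i ∈ I, (∑ b ∈ L with b ≤ a ∧ φ i ≤ b, mu a b) * g i := by
        rw [Finset.sum_comm]
        simp only [← Finset.sum_filter, Finset.filter_filter, Finset.sum_mul]
    _ = ∑ i ∈ I, (if φ i = a then 1 else 0) * g i :=
        Finset.sum_congr rfl fun i hi => by rw [hmu (hφ hi)]
    _ = ∑ i ∈ I with φ i = a, g i := by simp only [ite_mul, one_mul, zero_mul, Finset.sum_filter]

end Moebius

/-- for every flat `X` of a DA `A`,
`#C_{A^X} = Σ_{Y ≥ X} (−1)^{dim Y − dim X} μ(X,Y)`, where `μ` is the Möbius function of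
`L_A` (characterized by `μ(X,X) = 1`, `Σ_{X ≤ Z ≤ Y} μ(X,Z) = 0` for `X < Y`, and
`μ(X,Y) = 0` if `X ≰ Y`).  Here `Y ≥ X ↔ Y ⊆ X`, and the sign `(−1)^{dim Y − dim X}` is
written in the equivalent parity form `(−1)^{dim X + dim Y}`. -/
theorem card_chambers_restriction_eq_moebius_sum {N n : ℕ} (hn : 1 ≤ n) {T : Set (Euc N)}
    (hT : IsSimanifold n T) (A : Set (Dehyperplane N n T)) (hA : IsDA n T A)
    (mu : Set (Euc N) → Set (Euc N) → ℤ)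
    (hmu0 : ∀ X ∈ flats A, ∀ Y ∈ flats A, ¬ Y ⊆ X → mu X Y = 0)
    (hmu1 : ∀ X ∈ flats A, mu X X = 1)
    (hmu2 : ∀ X ∈ flats A, ∀ Y ∈ flats A, Y ⊆ X → Y ≠ X →
      ∑ᶠ Z ∈ {Z ∈ flats A | Z ⊆ X ∧ Y ⊆ Z}, mu X Z = 0)
    (X : Set (Euc N)) (hX : X ∈ flats A) :
    (Set.ncard {F | IsChamber (restrict A (sdim X) X) F} : ℤ) =
      ∑ᶠ Y ∈ {Y ∈ flats A | Y ⊆ X}, (-1 : ℤ) ^ (sdim X + sdim Y) * mu X Y := by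
  have hfaces := finite_setOf_isFace hA.1
  have hmaps : MapsTo (flatSpan A) {F | IsFace A F} (flats A) := fun F hF =>
    flatSpan_mem_flats Subset.rfl hF.subset hF.1
  have hinversion := finsum_moebius_mul_finsum (finite_flats hA.1) hfaces hmaps hX (hmu1 X hX)
    (hmu2 X hX) fun F => (-1) ^ sdim (flatSpan A F)
  symm
  calc ∑ᶠ Y ∈ {Y ∈ flats A | Y ⊆ X}, (-1 : ℤ) ^ (sdim X + sdim Y) * mu X Y
      = (-1) ^ sdim X * ∑ᶠ Y ∈ {Y ∈ flats A | Y ⊆ X},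
          mu X Y * ∑ᶠ F ∈ {F | IsFace A F ∧ flatSpan A F ⊆ Y}, (-1) ^ sdim (flatSpan A F) := by
        rw [mul_finsum_mem]
        refine finsum_mem_congr rfl fun Y hY => ?_
        rw [hA.finsum_isFace_neg_one_pow_sdim hT hY.1, pow_add, mul_assoc, mul_comm (mu X Y)]
    _ = (-1) ^ sdim X * ∑ᶠ F ∈ {F | IsFace A F ∧ flatSpan A F = X},
          (-1) ^ sdim (flatSpan A F) := congrArg _ hinversion
    _ = ∑ᶠ F ∈ {F | IsFace A F ∧ flatSpan A F = X}, 1 := by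
        rw [mul_finsum_mem]
        exact finsum_mem_congr rfl fun F hF => by simp [hF.2, ← mul_pow]
    _ = Set.ncard {F | IsChamber (restrict A (sdim X) X) F} := by
        simp only [hA.isChamber_restrict_iff hT hX]
        rw [← finsum_one, Nat.cast_finsum_mem (hfaces.subset fun F hF => hF.1), Nat.cast_one]
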